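/- There exist a constant c̃ > 0 and n₀ such that for all n ≥ n₀ and all indices i with α_n ≤ i < n − α_n, the conditional probability that vertex i is pruned by Rule 2, given the event D_i ∩ A_i, is at least 1 − c̃/(log ξ_n)^{3/2}. -/

import Mathlib

open MeasureTheory Real Set
open scoped ENNReal

noncomputable section

/-- The Euclidean plane ℝ². -/
abbrev Plane := EuclideanSpace ℝ (Fin 2)

/-- The square region `Q = [0, ℓ]²`. -/
def square (ℓ : ℝ) : Set Plane := {p | p 0 ∈ Set.Icc 0 ℓ ∧ p 1 ∈ Set.Icc 0 ℓ}

/-- The uniform probability measure on the square `[0, ℓ]²`. -/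
def unifSq (ℓ : ℝ) : Measure Plane := (volume (square ℓ))⁻¹ • volume.restrict (square ℓ)

/-- The joint law of `n` points `V₁, …, V_n` chosen independently and uniformly at random from
the square `[0, ℓ]²`. -/
def gMeasure (n : ℕ) (ℓ : ℝ) : Measure (Fin n → Plane) := Measure.pi fun _ => unifSq ℓ

/-- The (closed) neighborhood `N(i)` of vertex `i` in the unit disk graph on the points
`ω 0, …, ω (n-1)`: the vertex `i` together with all vertices adjacent to it. -/
def nbhd {n : ℕ} (ω : Fin n → Plane) (i : Fin n) : Set (Fin n) :=
  {j | j = i ∨ (j ≠ i ∧ dist (ω i) (ω j) ≤ 1)}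

/-- Vertex `i` is pruned by Rule 2: there are `i₁ > i₂ > i` with `i₁, i₂ ∈ N(i)`, `i₁`
adjacent to `i₂`, and `N(i) ⊆ N(i₁) ∪ N(i₂)`. (Here vertex IDs are ordered as the indices.) -/
def Pruned {n : ℕ} (ω : Fin n → Plane) (i : Fin n) : Prop :=
  ∃ i₁ i₂ : Fin n, i < i₂ ∧ i₂ < i₁ ∧ i₁ ∈ nbhd ω i ∧ i₂ ∈ nbhd ω i ∧
    dist (ω i₁) (ω i₂) ≤ 1 ∧ nbhd ω i ⊆ nbhd ω i₁ ∪ nbhd ω i₂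

/-- `U` is the number of vertices pruned by Rule 2. -/
def U (n : ℕ) (ω : Fin n → Plane) : ℕ := Set.ncard {i : Fin n | Pruned ω i}

/-- `ρ_i^{(b)}`: the number of points with index larger than `i` lying within distance 1
of `V_i`. (Indices are 0-based, so index `i` corresponds to the 1-based ID `i + 1`.) -/
def ρb (n : ℕ) (i : Fin n) (ω : Fin n → Plane) : ℕ :=
  Set.ncard {j : Fin n | i < j ∧ dist (ω j) (ω i) ≤ 1}

/-- `ρ_i^{(w)}`: the number of points with index smaller than `i` lying within distance 1
of `V_i`. -/
def ρw (n : ℕ) (i : Fin n) (ω : Fin n → Plane) : ℕ :=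
  Set.ncard {j : Fin n | j < i ∧ dist (ω j) (ω i) ≤ 1}

/-- `|D̂₁(V_i)|`: the area of `D₁(V_i) ∩ Q_n`. -/
def areaDhat (ℓ : ℝ) {n : ℕ} (i : Fin n) (ω : Fin n → Plane) : ℝ :=
  (volume (Metric.closedBall (ω i) 1 ∩ square ℓ)).toReal

/-- `μ_b(i) = (n − i)|D̂₁(V_i)|/ℓ²` (with the 1-based ID of the vertex of index `i`
being `i + 1`). -/
def μb (n : ℕ) (ℓ : ℝ) (i : Fin n) (ω : Fin n → Plane) : ℝ :=
  ((n : ℝ) - ((i : ℕ) + 1)) * areaDhat ℓ i ω / ℓ ^ 2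

/-- `μ_w(i) = (i − 1)|D̂₁(V_i)|/ℓ²` (with the 1-based ID of the vertex of index `i`
being `i + 1`). -/
def μw (n : ℕ) (ℓ : ℝ) (i : Fin n) (ω : Fin n → Plane) : ℝ :=
  ((i : ℕ) : ℝ) * areaDhat ℓ i ω / ℓ ^ 2

/-- The event `A_i`: the closed disk of radius `r` centered at `V_i` is contained in `Q_n`. -/
def eventA (n : ℕ) (ℓ r : ℝ) (i : Fin n) : Set (Fin n → Plane) :=
  {ω | Metric.closedBall (ω i) r ⊆ square ℓ}

/-- The event `D_i`: both `|ρ_i^{(b)} − μ_b(i)| < μ_b(i)/2` and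
`|ρ_i^{(w)} − μ_w(i)| < μ_w(i)/2` hold. -/
def eventD (n : ℕ) (ℓ : ℝ) (i : Fin n) : Set (Fin n → Plane) :=
  {ω | |(ρb n i ω : ℝ) - μb n ℓ i ω| < μb n ℓ i ω / 2 ∧
       |(ρw n i ω : ℝ) - μw n ℓ i ω| < μw n ℓ i ω / 2}

/-! Let `p` and `q` lie at distance about `s` from `v`, in almost opposite directions. The unit
disks around `p` and `q` then cover the unit disk around `v` up to an area `O(s ^ 3)`. A second
moment argument, with `p` and `q` ranging over two disjoint groups of `m` points of larger index,
finds of the order of `m ^ 2 * s ^ 5 / ℓ ^ 4` such pairs around `v = V i`, while on average only a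
fraction `O(n * s ^ 3 / ℓ ^ 2)` of them leave some other point of the disk uncovered. So, outside an
event of small probability, some pair prunes `i`. This holds for each value of `V i` far from the
boundary, so it survives conditioning on `A i`, given which `D i` has probability at least `1 / 2`.
-/

section Counting

variable {κ Ω : Type*}

/-- The number of the events `B a`, `a ∈ s`, that occur, as a real random variable. -/
def eventCount (s : Finset κ) (B : κ → Set Ω) (ω : Ω) : ℝ :=
  ∑ a ∈ s, (B a).indicator 1 ω

theorem eventCount_eq_ncard (s : Finset κ) (B : κ → Set Ω) (ω : Ω) :
    eventCount s B ω = {a | a ∈ s ∧ ω ∈ B a}.ncard := by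
  classical
  have hfilter : {a | a ∈ s ∧ ω ∈ B a} = (s.filter fun a => ω ∈ B a : Finset κ) := by
    ext; simp
  rw [hfilter, ncard_coe_finset, Finset.card_filter, Nat.cast_sum, eventCount]
  refine Finset.sum_congr rfl fun a _ => ?_
  by_cases ha : ω ∈ B a <;> simp [ha]

variable [MeasurableSpace Ω] {μ : Measure Ω} [IsProbabilityMeasure μ]
  {s : Finset κ} {B C : κ → Set Ω}

theorem memLp_indicator_one {A : Set Ω} (hA : MeasurableSet A) :
    MemLp (A.indicator (1 : Ω → ℝ)) 2 μ :=
  (memLp_const (1 : ℝ)).indicator hA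

theorem memLp_eventCount (hB : ∀ a ∈ s, MeasurableSet (B a)) : MemLp (eventCount s B) 2 μ :=
  memLp_finsetSum s fun a ha => memLp_indicator_one (hB a ha)

theorem integral_eventCount (hB : ∀ a ∈ s, MeasurableSet (B a)) :
    ∫ ω, eventCount s B ω ∂μ = ∑ a ∈ s, μ.real (B a) := by
  unfold eventCount
  rw [integral_finsetSum s fun a ha => (memLp_indicator_one (hB a ha)).integrable one_le_two]
  exact Finset.sum_congr rfl fun a ha => integral_indicator_one (hB a ha)

theorem covariance_indicator_one {A B : Set Ω} (hA : MeasurableSet A) (hB : MeasurableSet B) :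
    ProbabilityTheory.covariance (A.indicator (1 : Ω → ℝ)) (B.indicator 1) μ =
      μ.real (A ∩ B) - μ.real A * μ.real B := by
  rw [ProbabilityTheory.covariance_eq_sub (memLp_indicator_one hA) (memLp_indicator_one hB),
    ← inter_indicator_one, integral_indicator_one (hA.inter hB), integral_indicator_one hA,
    integral_indicator_one hB]

theorem variance_eventCount_le (hB : ∀ a ∈ s, MeasurableSet (B a)) (r : κ → κ → Prop)
    [DecidableRel r]
    (hr : ∀ a ∈ s, ∀ b ∈ s, ¬ r a b → ProbabilityTheory.IndepSet (B a) (B b) μ) :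
    ProbabilityTheory.variance (eventCount s B) μ ≤
      ∑ a ∈ s, ∑ b ∈ s with r a b, μ.real (B a ∩ B b) := by
  unfold eventCount
  rw [ProbabilityTheory.variance_fun_sum' fun a ha => memLp_indicator_one (hB a ha)]
  refine Finset.sum_le_sum fun a ha => ?_
  rw [Finset.sum_filter]
  refine Finset.sum_le_sum fun b hb => ?_
  rw [covariance_indicator_one (hB a ha) (hB b hb)]
  split_ifs with hab
  · exact sub_le_self _ (by positivity)
  · simp only [measureReal_def, (hr a ha b hb hab).measure_inter_eq_mul, ENNReal.toReal_mul,
      sub_self, le_refl]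

theorem measureReal_half_mean_le_abs_sub_le {X : Ω → ℝ} (hX : MemLp X 2 μ)
    (hpos : 0 < ∫ ω, X ω ∂μ) :
    μ.real {ω | (∫ ω, X ω ∂μ) / 2 ≤ |X ω - ∫ ω, X ω ∂μ|} ≤
      4 * ProbabilityTheory.variance X μ / (∫ ω, X ω ∂μ) ^ 2 := by
  have hchebyshev := ProbabilityTheory.meas_ge_le_variance_div_sq hX (half_pos hpos)
  have hvar := ProbabilityTheory.variance_nonneg X μ
  calc _ ≤ ProbabilityTheory.variance X μ / ((∫ ω, X ω ∂μ) / 2) ^ 2 :=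
        ENNReal.toReal_le_of_le_ofReal (by positivity) hchebyshev
    _ = _ := by field_simp; ring

theorem measureReal_half_mean_le_abs_eventCount_sub_le (hB : ∀ a ∈ s, MeasurableSet (B a))
    (hindep : ∀ a ∈ s, ∀ b ∈ s, a ≠ b → ProbabilityTheory.IndepSet (B a) (B b) μ)
    (hpos : 0 < ∑ a ∈ s, μ.real (B a)) :
    μ.real {ω | (∑ a ∈ s, μ.real (B a)) / 2 ≤ |eventCount s B ω - ∑ a ∈ s, μ.real (B a)|} ≤
      4 / ∑ a ∈ s, μ.real (B a) := by
  classical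
  have hvar : ProbabilityTheory.variance (eventCount s B) μ ≤ ∑ a ∈ s, μ.real (B a) := by
    refine (variance_eventCount_le hB (· = ·) hindep).trans_eq (Finset.sum_congr rfl fun a ha => ?_)
    rw [Finset.filter_eq, if_pos ha, Finset.sum_singleton, inter_self]
  have hdev := measureReal_half_mean_le_abs_sub_le (memLp_eventCount (μ := μ) hB)
    (by rwa [integral_eventCount hB])
  rw [integral_eventCount hB] at hdev
  refine hdev.trans ?_
  rw [div_le_div_iff₀ (by positivity) hpos]
  nlinarith

theorem measureReal_le_le_variance_add_mean {X Y : Ω → ℝ} (hX : MemLp X 2 μ)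
    (hY : Integrable Y μ) (hY₀ : 0 ≤ Y) (hpos : 0 < ∫ ω, X ω ∂μ) :
    μ.real {ω | X ω ≤ Y ω} ≤
      4 * ProbabilityTheory.variance X μ / (∫ ω, X ω ∂μ) ^ 2 +
        2 * (∫ ω, Y ω ∂μ) / ∫ ω, X ω ∂μ := by
  set M := ∫ ω, X ω ∂μ
  have hcover : {ω | X ω ≤ Y ω} ⊆ {ω | M / 2 ≤ |X ω - M|} ∪ {ω | M / 2 ≤ Y ω} := by
    intro ω (hω : X ω ≤ Y ω)
    rcases le_total (M / 2) (Y ω) with h | h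
    · exact Or.inr h
    · exact Or.inl (by change M / 2 ≤ |X ω - M|; linarith [neg_le_abs (X ω - M)])
  have hmarkov : μ.real {ω | M / 2 ≤ Y ω} ≤ 2 * (∫ ω, Y ω ∂μ) / M := by
    have h := mul_meas_ge_le_integral_of_nonneg (.of_forall hY₀) hY (M / 2)
    rw [le_div_iff₀ hpos]
    linarith
  calc μ.real {ω | X ω ≤ Y ω}
      ≤ μ.real {ω | M / 2 ≤ |X ω - M|} + μ.real {ω | M / 2 ≤ Y ω} :=
        (measureReal_mono hcover).trans (measureReal_union_le _ _)
    _ ≤ _ := add_le_add (measureReal_half_mean_le_abs_sub_le hX hpos) hmarkov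

theorem measureReal_forall_mem_imp_mem_le (hB : ∀ a ∈ s, MeasurableSet (B a))
    (hC : ∀ a ∈ s, MeasurableSet (C a)) (hpos : 0 < ∑ a ∈ s, μ.real (B a)) :
    μ.real {ω | ∀ a ∈ s, ω ∈ B a → ω ∈ C a} ≤
      4 * ProbabilityTheory.variance (eventCount s B) μ / (∑ a ∈ s, μ.real (B a)) ^ 2 +
        2 * (∑ a ∈ s, μ.real (C a)) / ∑ a ∈ s, μ.real (B a) := by
  rw [← integral_eventCount hB, ← integral_eventCount hC]
  rw [← integral_eventCount hB] at hpos
  have hnonneg : 0 ≤ eventCount s C := fun ω =>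
    Finset.sum_nonneg fun a _ => indicator_nonneg (fun _ _ => zero_le_one) ω
  refine (measureReal_mono fun ω hω => ?_).trans (measureReal_le_le_variance_add_mean
    (memLp_eventCount hB) ((memLp_eventCount hC).integrable one_le_two) hnonneg hpos)
  change eventCount s B ω ≤ eventCount s C ω
  refine Finset.sum_le_sum fun a ha => ?_
  by_cases hωB : ω ∈ B a
  · rw [indicator_of_mem hωB, indicator_of_mem (hω a ha hωB)]
  · rw [indicator_of_notMem hωB]
    exact indicator_nonneg (fun _ _ => zero_le_one) ω

end Counting

section ProductMeasures

theorem measureReal_preimage_of_measurePreserving {E F : Type*} [MeasurableSpace E]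
    [MeasurableSpace F] {μ : Measure E} {ν : Measure F} {f : E → F} (hf : MeasurePreserving f μ ν)
    {A : Set F} (hA : MeasurableSet A) : μ.real (f ⁻¹' A) = ν.real A :=
  congrArg ENNReal.toReal (hf.measure_preimage hA.nullMeasurableSet)

variable {E F : Type*} [MeasurableSpace E] [MeasurableSpace F] {μ : Measure E} {ν : Measure F}
  {T : Set (E × F)} {R : Set E}

theorem prod_apply_le_mul_of_fiber_le [SFinite ν] (hT : MeasurableSet T) (hTR : ∀ z ∈ T, z.1 ∈ R)
    {c : ℝ≥0∞} (hc : ∀ x ∈ R, ν (Prod.mk x ⁻¹' T) ≤ c) : μ.prod ν T ≤ c * μ R := by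
  rw [Measure.prod_apply hT]
  refine (lintegral_mono fun x => ?_).trans (lintegral_indicator_const_le R c)
  by_cases hx : x ∈ R
  · rw [indicator_of_mem hx]
    exact hc x hx
  · have hempty : Prod.mk x ⁻¹' T = ∅ := eq_empty_of_forall_notMem fun y hy => hx (hTR _ hy)
    rw [hempty, measure_empty]
    exact zero_le

theorem mul_le_prod_apply_of_le_fiber [SFinite ν] (hT : MeasurableSet T) {c : ℝ≥0∞}
    (hc : ∀ x ∈ R, c ≤ ν (Prod.mk x ⁻¹' T)) : c * μ R ≤ μ.prod ν T := by
  rw [Measure.prod_apply hT, ← setLIntegral_const]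
  exact (setLIntegral_mono (measurable_measure_prodMk_left hT) hc).trans
    (setLIntegral_le_lintegral R _)

theorem prod_real_le_mul_of_fiber_le [IsFiniteMeasure μ] [IsFiniteMeasure ν]
    (hT : MeasurableSet T) (hTR : ∀ z ∈ T, z.1 ∈ R) {c : ℝ} (hc₀ : 0 ≤ c)
    (hc : ∀ x ∈ R, ν.real (Prod.mk x ⁻¹' T) ≤ c) : (μ.prod ν).real T ≤ c * μ.real R := by
  refine ENNReal.toReal_le_of_le_ofReal (by positivity) ?_
  rw [ENNReal.ofReal_mul hc₀, ofReal_measureReal]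
  exact prod_apply_le_mul_of_fiber_le hT hTR fun x hx =>
    (ENNReal.le_ofReal_iff_toReal_le (measure_ne_top _ _) hc₀).2 (hc x hx)

theorem mul_le_prod_real_of_le_fiber [IsFiniteMeasure μ] [IsFiniteMeasure ν]
    (hT : MeasurableSet T) {c : ℝ} (hc₀ : 0 ≤ c)
    (hc : ∀ x ∈ R, c ≤ ν.real (Prod.mk x ⁻¹' T)) : c * μ.real R ≤ (μ.prod ν).real T := by
  refine (ENNReal.ofReal_le_iff_le_toReal (measure_ne_top _ _)).1 ?_
  rw [ENNReal.ofReal_mul hc₀, ofReal_measureReal]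
  exact mul_le_prod_apply_of_le_fiber hT fun x hx =>
    (ENNReal.ofReal_le_iff_le_toReal (measure_ne_top _ _)).2 (hc x hx)

end ProductMeasures

section Resampling

variable {ι : Type*} [Fintype ι] [DecidableEq ι] {E : ι → Type*} [∀ i, MeasurableSpace (E i)]
  (P : ∀ i, Measure (E i)) [∀ i, IsProbabilityMeasure (P i)]

theorem measurePreserving_update (i : ι) :
    MeasurePreserving (fun z : E i × (∀ j, E j) => Function.update z.2 i z.1)
      ((P i).prod (Measure.pi P)) (Measure.pi P) := by
  have hmeas : Measurable fun z : E i × (∀ j, E j) => Function.update z.2 i z.1 :=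
    measurable_update'.comp measurable_swap
  refine ⟨hmeas, (Measure.pi_eq fun s hs => ?_).symm⟩
  have hpre : (fun z : E i × (∀ j, E j) => Function.update z.2 i z.1) ⁻¹' univ.pi s =
      s i ×ˢ univ.pi (Function.update s i univ) := by
    ext z
    simp only [mem_preimage, mem_prod, mem_univ_pi]
    grind
  rw [Measure.map_apply hmeas (.univ_pi hs), hpre, Measure.prod_prod, Measure.pi_pi,
    ← Finset.mul_prod_erase _ _ (Finset.mem_univ i),
    ← Finset.mul_prod_erase _ (fun j => P j (s j)) (Finset.mem_univ i), Function.update_self,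
    measure_univ, one_mul]
  exact congrArg _ (Finset.prod_congr rfl fun j hj => by
    rw [Function.update_of_ne (Finset.ne_of_mem_erase hj)])

theorem pi_real_eval_inter_le {i : ι} {A : Set (E i)} (hA : MeasurableSet A)
    {B : Set (∀ j, E j)} (hB : MeasurableSet B) {c : ℝ} (hc₀ : 0 ≤ c)
    (hc : ∀ v ∈ A, (Measure.pi P).real {ω | Function.update ω i v ∈ B} ≤ c) :
    (Measure.pi P).real ({ω | ω i ∈ A} ∩ B) ≤ c * (Measure.pi P).real {ω | ω i ∈ A} := by
  have hmp := measurePreserving_update P i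
  have hAB : MeasurableSet ({ω : ∀ j, E j | ω i ∈ A} ∩ B) := (measurable_pi_apply i hA).inter hB
  have hPA : (Measure.pi P).real {ω | ω i ∈ A} = (P i).real A :=
    measureReal_preimage_of_measurePreserving (measurePreserving_eval P i) hA
  rw [hPA, ← measureReal_preimage_of_measurePreserving hmp hAB]
  refine prod_real_le_mul_of_fiber_le (hmp.measurable hAB) (fun z hz => ?_) hc₀ fun v hv =>
    (measureReal_mono fun ω hω => hω.2).trans (hc v hv)
  exact Function.update_self (β := E) i z.1 z.2 ▸ hz.1

end Resampling

section IndependentCoordinates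

variable {ι E : Type*} [Fintype ι] [MeasurableSpace E] (P : Measure E) [IsProbabilityMeasure P]

theorem iIndepFun_eval :
    ProbabilityTheory.iIndepFun (fun (j : ι) (ω : ι → E) => ω j) (Measure.pi fun _ => P) :=
  ProbabilityTheory.iIndepFun_pi (X := fun _ x => x) fun _ => aemeasurable_id

variable {j k l : ι}

theorem measurePreserving_eval_pair (hjk : j ≠ k) :
    MeasurePreserving (fun ω : ι → E => (ω j, ω k)) (Measure.pi fun _ => P) (P.prod P) := by
  refine ⟨by fun_prop, ?_⟩
  rw [(ProbabilityTheory.indepFun_iff_map_prod_eq_prod_map_map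
    (measurable_pi_apply j).aemeasurable (measurable_pi_apply k).aemeasurable).1
    ((iIndepFun_eval P).indepFun hjk)]
  exact congrArg₂ Measure.prod (measurePreserving_eval (fun _ => P) j).map_eq
    (measurePreserving_eval (fun _ => P) k).map_eq

theorem measurePreserving_eval_triple (hjk : j ≠ k) (hjl : j ≠ l) (hkl : k ≠ l) :
    MeasurePreserving (fun ω : ι → E => ((ω j, ω k), ω l)) (Measure.pi fun _ => P)
      ((P.prod P).prod P) := by
  refine ⟨by fun_prop, ?_⟩
  rw [(ProbabilityTheory.indepFun_iff_map_prod_eq_prod_map_map (by fun_prop)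
      (measurable_pi_apply l).aemeasurable).1
    ((iIndepFun_eval P).indepFun_prodMk (fun _ => measurable_pi_apply _) j k l hjl hkl),
    (measurePreserving_eval_pair P hjk).map_eq]
  exact congrArg _ (measurePreserving_eval (fun _ => P) l).map_eq

variable {S : Set (E × E)} {T : Set ((E × E) × E)} {u : ℝ}

theorem pi_real_pair_mem_inter_triple_mem_le (hS : MeasurableSet S) (hT : MeasurableSet T)
    (hu₀ : 0 ≤ u) (hu : ∀ z ∈ S, P.real (Prod.mk z ⁻¹' T) ≤ u)
    (hjk : j ≠ k) (hjl : j ≠ l) (hkl : k ≠ l) :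
    (Measure.pi fun _ => P).real
      ({ω : ι → E | (ω j, ω k) ∈ S} ∩ {ω | ((ω j, ω k), ω l) ∈ T}) ≤ u * (P.prod P).real S := by
  have hST : MeasurableSet (Prod.fst ⁻¹' S ∩ T) := (measurable_fst hS).inter hT
  refine (measureReal_preimage_of_measurePreserving
    (measurePreserving_eval_triple P hjk hjl hkl) hST).trans_le ?_
  exact prod_real_le_mul_of_fiber_le hST (fun z hz => hz.1) hu₀ fun z hz =>
    (measureReal_mono fun w hw => hw.2).trans (hu z hz)

end IndependentCoordinates

section PairEvents

variable {ι E : Type*} [MeasurableSpace E] {S : Set (E × E)} {T : Set ((E × E) × E)}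

/-- The event that the points with the two given indices form a pair in `S`. -/
def pairEvent (S : Set (E × E)) (a : ι × ι) : Set (ι → E) :=
  {ω | (ω a.1, ω a.2) ∈ S}

/-- The event that the points with the two given indices form a pair in `S` that is blocked by
some third point, one forming with them a triple in `T`. -/
def blockedEvent (S : Set (E × E)) (T : Set ((E × E) × E)) (a : ι × ι) : Set (ι → E) :=
  {ω | (ω a.1, ω a.2) ∈ S ∧ ∃ l, l ≠ a.1 ∧ l ≠ a.2 ∧ ((ω a.1, ω a.2), ω l) ∈ T}

theorem measurableSet_pairEvent (hS : MeasurableSet S) (a : ι × ι) :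
    MeasurableSet (pairEvent S a) :=
  ((measurable_pi_apply a.1).prodMk (measurable_pi_apply a.2)) hS

theorem measurableSet_blockedEvent [Countable ι] (hS : MeasurableSet S) (hT : MeasurableSet T)
    (a : ι × ι) : MeasurableSet (blockedEvent S T a) := by
  have hthird (l : ι) : MeasurableSet {ω : ι → E | ((ω a.1, ω a.2), ω l) ∈ T} :=
    ((measurable_pi_apply a.1).prodMk (measurable_pi_apply a.2)).prodMk (measurable_pi_apply l) hT
  exact (measurableSet_pairEvent hS a).inter (measurableSet_setOfPred.2 (.exists fun l =>
    measurableSet_setOfPred.1 (.inter (.const _) (.inter (.const _) (hthird l)))))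

variable [Fintype ι] (P : Measure E) [IsProbabilityMeasure P]

theorem pi_real_pairEvent (hS : MeasurableSet S) {a : ι × ι} (ha : a.1 ≠ a.2) :
    (Measure.pi fun _ => P).real (pairEvent S a) = (P.prod P).real S :=
  measureReal_preimage_of_measurePreserving (measurePreserving_eval_pair P ha) hS

variable {q u : ℝ}

theorem pi_real_blockedEvent_le (hS : MeasurableSet S) (hT : MeasurableSet T) (hu₀ : 0 ≤ u)
    (hu : ∀ z ∈ S, P.real (Prod.mk z ⁻¹' T) ≤ u) {a : ι × ι} (ha : a.1 ≠ a.2) :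
    (Measure.pi fun _ => P).real (blockedEvent S T a) ≤
      Fintype.card ι * (u * (P.prod P).real S) := by
  classical
  set L : Finset ι := {l | l ≠ a.1 ∧ l ≠ a.2}
  have hunion : blockedEvent S T a ⊆
      ⋃ l ∈ L, ({ω | (ω a.1, ω a.2) ∈ S} ∩ {ω | ((ω a.1, ω a.2), ω l) ∈ T}) := by
    rintro ω ⟨hωS, l, hl₁, hl₂, hωT⟩
    exact mem_biUnion (Finset.mem_filter.2 ⟨Finset.mem_univ l, hl₁, hl₂⟩) ⟨hωS, hωT⟩
  calc (Measure.pi fun _ => P).real (blockedEvent S T a)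
      ≤ ∑ l ∈ L, (Measure.pi fun _ => P).real
          ({ω : ι → E | (ω a.1, ω a.2) ∈ S} ∩ {ω | ((ω a.1, ω a.2), ω l) ∈ T}) :=
        (measureReal_mono hunion (measure_ne_top _ _)).trans (measureReal_biUnion_finset_le L _)
    _ ≤ L.card • (u * (P.prod P).real S) := Finset.sum_le_card_nsmul _ _ _ fun l hl =>
        have hl := (Finset.mem_filter.1 hl).2
        pi_real_pair_mem_inter_triple_mem_le P hS hT hu₀ hu ha hl.1.symm hl.2.symm
    _ ≤ Fintype.card ι * (u * (P.prod P).real S) := by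
        rw [nsmul_eq_mul]
        gcongr
        exact L.card_le_univ

theorem pi_real_pairEvent_inter_le (hS : MeasurableSet S) (hq₀ : 0 ≤ q)
    (hfst : ∀ z ∈ S, P.real {y | (z.1, y) ∈ S} ≤ q)
    (hsnd : ∀ z ∈ S, P.real {x | (x, z.2) ∈ S} ≤ q)
    {a b : ι × ι} (ha : a.1 ≠ a.2) (hb : b.1 ≠ b.2) (hab : a ≠ b)
    (hshare : a.1 = b.1 ∨ a.2 = b.2) :
    (Measure.pi fun _ => P).real (pairEvent S a ∩ pairEvent S b) ≤ q * (P.prod P).real S := by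
  obtain ⟨j, k⟩ := a
  obtain ⟨j', k'⟩ := b
  rcases hshare with rfl | rfl
  · exact pi_real_pair_mem_inter_triple_mem_le P (T := {z | (z.1.1, z.2) ∈ S}) hS
      (by measurability) hq₀ hfst ha hb fun h => hab (Prod.ext rfl h)
  · exact pi_real_pair_mem_inter_triple_mem_le P (T := {z | (z.2, z.1.2) ∈ S}) hS
      (by measurability) hq₀ hsnd ha (fun h => hab (Prod.ext h rfl)) hb.symm

end PairEvents

section BlockedPairs

variable {ι E : Type*} {G₁ G₂ : Finset ι}

theorem ne_of_mem_product (hG : Disjoint G₁ G₂) {a : ι × ι} (ha : a ∈ G₁ ×ˢ G₂) : a.1 ≠ a.2 :=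
  have ha := Finset.mem_product.1 ha
  Finset.disjoint_iff_ne.1 hG _ ha.1 _ ha.2

variable [Fintype ι] [MeasurableSpace E] (P : Measure E) [IsProbabilityMeasure P]
  {S : Set (E × E)} {T : Set ((E × E) × E)} {q u : ℝ}

theorem indepSet_pairEvent (hS : MeasurableSet S) (hG : Disjoint G₁ G₂) {a b : ι × ι}
    (ha : a ∈ G₁ ×ˢ G₂) (hb : b ∈ G₁ ×ˢ G₂) (hab : ¬ (a.1 = b.1 ∨ a.2 = b.2)) :
    ProbabilityTheory.IndepSet (pairEvent S a) (pairEvent S b) (Measure.pi fun _ => P) := by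
  push Not at hab
  have ha := Finset.mem_product.1 ha
  have hb := Finset.mem_product.1 hb
  rw [ProbabilityTheory.indepSet_iff_measure_inter_eq_mul (measurableSet_pairEvent hS a)
    (measurableSet_pairEvent hS b) (Measure.pi fun _ => P)]
  exact ((iIndepFun_eval P).indepFun_prodMk_prodMk (fun _ => measurable_pi_apply _)
    a.1 a.2 b.1 b.2 hab.1 (Finset.disjoint_iff_ne.1 hG _ ha.1 _ hb.2)
    (Finset.disjoint_iff_ne.1 hG _ hb.1 _ ha.2).symm hab.2).measure_inter_preimage_eq_mul S S hS hS

theorem sum_pi_real_pairEvent_inter_le [DecidableEq ι] (hS : MeasurableSet S) (hq₀ : 0 ≤ q)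
    (hfst : ∀ z ∈ S, P.real {y | (z.1, y) ∈ S} ≤ q)
    (hsnd : ∀ z ∈ S, P.real {x | (x, z.2) ∈ S} ≤ q) (hG : Disjoint G₁ G₂)
    {a : ι × ι} (ha : a ∈ G₁ ×ˢ G₂) :
    ∑ b ∈ G₁ ×ˢ G₂ with a.1 = b.1 ∨ a.2 = b.2,
        (Measure.pi fun _ => P).real (pairEvent S a ∩ pairEvent S b) ≤
      (1 + (G₁.card + G₂.card) * q) * (P.prod P).real S := by
  set p := (P.prod P).real S
  set N : Finset (ι × ι) := {b ∈ G₁ ×ˢ G₂ | a.1 = b.1 ∨ a.2 = b.2}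
  have hcard : (N.card : ℝ) ≤ G₁.card + G₂.card := by
    have hsub : N ⊆ G₁.image (·, a.2) ∪ G₂.image (a.1, ·) := by grind
    exact_mod_cast (Finset.card_le_card hsub).trans ((Finset.card_union_le _ _).trans
      (add_le_add Finset.card_image_le Finset.card_image_le))
  have hterm : ∀ b ∈ N, (Measure.pi fun _ => P).real (pairEvent S a ∩ pairEvent S b) ≤
      (if a = b then p else 0) + q * p := fun b hb => by
    obtain ⟨hbG, hab⟩ := Finset.mem_filter.1 hb
    split_ifs with h
    · rw [← h, inter_self]
      exact (pi_real_pairEvent P hS (ne_of_mem_product hG ha)).le.trans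
        (le_add_of_nonneg_right (by positivity))
    · rw [zero_add]
      exact pi_real_pairEvent_inter_le P hS hq₀ hfst hsnd (ne_of_mem_product hG ha)
        (ne_of_mem_product hG hbG) h hab
  have haN : a ∈ N := Finset.mem_filter.2 ⟨ha, Or.inl rfl⟩
  calc ∑ b ∈ N, (Measure.pi fun _ => P).real (pairEvent S a ∩ pairEvent S b)
      ≤ ∑ b ∈ N, ((if a = b then p else 0) + q * p) := Finset.sum_le_sum hterm
    _ = p + N.card * (q * p) := by
        rw [Finset.sum_add_distrib, Finset.sum_ite_eq, if_pos haN, Finset.sum_const,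
          nsmul_eq_mul]
    _ ≤ p + (G₁.card + G₂.card) * (q * p) := by gcongr
    _ = (1 + (G₁.card + G₂.card) * q) * p := by ring

theorem variance_eventCount_pairEvent_le (hS : MeasurableSet S) (hq₀ : 0 ≤ q)
    (hfst : ∀ z ∈ S, P.real {y | (z.1, y) ∈ S} ≤ q)
    (hsnd : ∀ z ∈ S, P.real {x | (x, z.2) ∈ S} ≤ q) (hG : Disjoint G₁ G₂) :
    ProbabilityTheory.variance (eventCount (G₁ ×ˢ G₂) (pairEvent S))
        (Measure.pi fun _ : ι => P) ≤
      G₁.card * G₂.card * ((1 + (G₁.card + G₂.card) * q) * (P.prod P).real S) := by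
  classical
  refine (variance_eventCount_le (fun a _ => measurableSet_pairEvent hS a)
    (fun a b => a.1 = b.1 ∨ a.2 = b.2)
    fun a ha b hb => indepSet_pairEvent P hS hG ha hb).trans ?_
  refine (Finset.sum_le_card_nsmul _ _ _ fun a ha =>
    sum_pi_real_pairEvent_inter_le P hS hq₀ hfst hsnd hG ha).trans_eq ?_
  rw [Finset.card_product, nsmul_eq_mul, Nat.cast_mul]

theorem pi_real_forall_pair_blocked_le (hS : MeasurableSet S) (hT : MeasurableSet T)
    (hq₀ : 0 ≤ q) (hfst : ∀ z ∈ S, P.real {y | (z.1, y) ∈ S} ≤ q)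
    (hsnd : ∀ z ∈ S, P.real {x | (x, z.2) ∈ S} ≤ q)
    (hu₀ : 0 ≤ u) (hu : ∀ z ∈ S, P.real (Prod.mk z ⁻¹' T) ≤ u)
    (hG : Disjoint G₁ G₂) (hG₁ : G₁.Nonempty) (hG₂ : G₂.Nonempty) (hp : 0 < (P.prod P).real S) :
    (Measure.pi fun _ => P).real
      {ω : ι → E | ∀ a ∈ G₁ ×ˢ G₂, ω ∈ pairEvent S a → ω ∈ blockedEvent S T a} ≤
        4 * (1 + (G₁.card + G₂.card) * q) / (G₁.card * G₂.card * (P.prod P).real S) +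
          2 * (Fintype.card ι * u) := by
  have hmean : ∑ a ∈ G₁ ×ˢ G₂, (Measure.pi fun _ : ι => P).real (pairEvent S a) =
      G₁.card * G₂.card * (P.prod P).real S := by
    rw [Finset.sum_congr rfl fun a ha => pi_real_pairEvent P hS (ne_of_mem_product hG ha),
      Finset.sum_const, Finset.card_product, nsmul_eq_mul, Nat.cast_mul]
  have hblocked : ∑ a ∈ G₁ ×ˢ G₂, (Measure.pi fun _ : ι => P).real (blockedEvent S T a) ≤
      G₁.card * G₂.card * (Fintype.card ι * (u * (P.prod P).real S)) := by
    refine (Finset.sum_le_card_nsmul _ _ _ fun a ha =>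
      pi_real_blockedEvent_le P hS hT hu₀ hu (ne_of_mem_product hG ha)).trans_eq ?_
    rw [Finset.card_product, nsmul_eq_mul, Nat.cast_mul]
  refine (measureReal_forall_mem_imp_mem_le (fun a _ => measurableSet_pairEvent hS a)
    (fun a _ => measurableSet_blockedEvent hS hT a) (hmean ▸ by positivity)).trans ?_
  rw [hmean]
  refine (add_le_add (div_le_div_of_nonneg_right (mul_le_mul_of_nonneg_left
    (variance_eventCount_pairEvent_le P hS hq₀ hfst hsnd hG) zero_le_four) (by positivity))
    (div_le_div_of_nonneg_right (mul_le_mul_of_nonneg_left hblocked zero_le_two)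
      (by positivity))).trans_eq ?_
  field_simp

end BlockedPairs

section PlaneVolume

open scoped RealInnerProductSpace

theorem volume_preserving_plane_coords :
    MeasurePreserving (fun p : Plane => (p 0, p 1)) volume volume :=
  (volume_preserving_finTwoArrow ℝ).comp
    (EuclideanSpace.volume_preserving_symm_measurableEquiv_toLp (Fin 2))

theorem volume_plane_box {I J : Set ℝ} (hI : MeasurableSet I) (hJ : MeasurableSet J) :
    volume {p : Plane | p 0 ∈ I ∧ p 1 ∈ J} = volume I * volume J :=
  (volume_preserving_plane_coords.measure_preimage (hI.prod hJ).nullMeasurableSet).trans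
    (Measure.prod_prod I J)

theorem volume_strip {I : Set ℝ} (hI : MeasurableSet I) {c : ℝ} (hc : c ≠ 0) (d e : ℝ) :
    volume {p : Plane | p 0 ∈ I ∧ |c * p 1 - d * p 0| ≤ e} =
      ENNReal.ofReal (2 * (e / |c|)) * volume I := by
  set T : Set (ℝ × ℝ) := {z | z.1 ∈ I ∧ |c * z.2 - d * z.1| ≤ e}
  have hT : MeasurableSet T :=
    (measurable_fst hI).inter (measurableSet_le (f := fun z : ℝ × ℝ => |c * z.2 - d * z.1|)
      (by fun_prop) measurable_const)
  have hfiber : ∀ x ∈ I, volume (Prod.mk x ⁻¹' T) = ENNReal.ofReal (2 * (e / |c|)) := by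
    intro x hx
    rw [← Real.volume_closedBall (d * x / c)]
    congr 1
    ext y
    have hfactor : c * y - d * x = c * (y - d * x / c) := by field_simp
    rw [Metric.mem_closedBall, Real.dist_eq, le_div_iff₀' (abs_pos.2 hc), ← abs_mul, ← hfactor]
    exact and_iff_right hx
  exact (volume_preserving_plane_coords.measure_preimage hT.nullMeasurableSet).trans
    (le_antisymm
      (prod_apply_le_mul_of_fiber_le hT (fun z hz => hz.1) fun x hx => (hfiber x hx).le)
      (mul_le_prod_apply_of_le_fiber hT fun x hx => (hfiber x hx).ge))

theorem plane_norm_sq (p : Plane) : ‖p‖ ^ 2 = p 0 ^ 2 + p 1 ^ 2 := by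
  rw [EuclideanSpace.real_norm_sq_eq, Fin.sum_univ_two]

theorem volume_sq_mem_Icc_le {A δ : ℝ} (hA : 1 / 4 ≤ A) (hδ : 0 ≤ δ) :
    volume {y : ℝ | A - δ ≤ y ^ 2 ∧ y ^ 2 ≤ A} ≤ ENNReal.ofReal (4 * δ) := by
  have hB : 1 / 2 ≤ √A := Real.le_sqrt_of_sq_le (by linarith)
  have hBA : √A ^ 2 = A := Real.sq_sqrt (by linarith)
  have hsub : {y : ℝ | A - δ ≤ y ^ 2 ∧ y ^ 2 ≤ A} ⊆
      Icc (√A - 2 * δ) √A ∪ Icc (-√A) (-√A + 2 * δ) := by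
    rintro y ⟨hlow, hhigh⟩
    obtain ⟨hneg, hpos⟩ := abs_le.1 (Real.abs_le_sqrt hhigh)
    rcases le_total 0 y with h | h
    · exact Or.inl ⟨by nlinarith, hpos⟩
    · exact Or.inr ⟨hneg, by nlinarith⟩
  refine (measure_mono hsub).trans ((measure_union_le _ _).trans (le_of_eq ?_))
  rw [Real.volume_Icc, Real.volume_Icc, ← ENNReal.ofReal_add (by linarith) (by linarith)]
  congr 1
  ring

theorem volume_annulus_inter_vertical_slab_le {τ δ : ℝ} (hτ : τ ≤ 1 / 2) (hδ : 0 ≤ δ) :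
    volume {w : Plane | |w 0| ≤ τ ∧ 1 - δ ≤ ‖w‖ ^ 2 ∧ ‖w‖ ^ 2 ≤ 1} ≤
      ENNReal.ofReal (8 * τ * δ) := by
  set T : Set (ℝ × ℝ) := {z | |z.1| ≤ τ ∧ 1 - δ ≤ z.1 ^ 2 + z.2 ^ 2 ∧ z.1 ^ 2 + z.2 ^ 2 ≤ 1}
  have hT : MeasurableSet T := by measurability
  have hfiber : ∀ x ∈ Icc (-τ) τ, volume (Prod.mk x ⁻¹' T) ≤ ENNReal.ofReal (4 * δ) := by
    intro x hx
    refine (measure_mono fun y hy => ?_).trans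
      (volume_sq_mem_Icc_le (A := 1 - x ^ 2) (by nlinarith [hx.1, hx.2]) hδ)
    exact ⟨by linarith [hy.2.1], by linarith [hy.2.2]⟩
  simp only [plane_norm_sq]
  calc volume {w : Plane | |w 0| ≤ τ ∧ 1 - δ ≤ w 0 ^ 2 + w 1 ^ 2 ∧ w 0 ^ 2 + w 1 ^ 2 ≤ 1}
      = volume T := volume_preserving_plane_coords.measure_preimage hT.nullMeasurableSet
    _ ≤ ENNReal.ofReal (4 * δ) * volume (Icc (-τ) τ) :=
        prod_apply_le_mul_of_fiber_le hT (fun z hz => abs_le.1 hz.1) hfiber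
    _ = ENNReal.ofReal (8 * τ * δ) := by
        rw [Real.volume_Icc, ← ENNReal.ofReal_mul (by positivity)]
        congr 1
        ring

theorem exists_orthonormalBasis_plane_apply_zero {u : Plane} (hu : ‖u‖ = 1) :
    ∃ b : OrthonormalBasis (Fin 2) ℝ Plane, b 0 = u := by
  have hon : Orthonormal ℝ (({0} : Set (Fin 2)).domRestrict fun _ => u) :=
    orthonormal_subsingleton_iff.2 fun _ => hu
  obtain ⟨b, hb⟩ := hon.exists_orthonormalBasis_extension_of_card_eq (by simp)
  exact ⟨b, hb 0 rfl⟩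

theorem volume_annulus_inter_slab_le {a : Plane} (ha : a ≠ 0) {τ δ : ℝ} (hτ : τ ≤ 1 / 2)
    (hδ : 0 ≤ δ) :
    volume {w : Plane | |⟪a, w⟫| ≤ τ * ‖a‖ ∧ 1 - δ ≤ ‖w‖ ^ 2 ∧ ‖w‖ ^ 2 ≤ 1} ≤
      ENNReal.ofReal (8 * τ * δ) := by
  obtain ⟨b, hb⟩ := exists_orthonormalBasis_plane_apply_zero (norm_smul_inv_norm (𝕜 := ℝ) ha)
  refine le_trans (le_of_eq ?_) (volume_annulus_inter_vertical_slab_le hτ hδ)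
  rw [← b.measurePreserving_measurableEquiv.measure_preimage_equiv
    {w | |w 0| ≤ τ ∧ 1 - δ ≤ ‖w‖ ^ 2 ∧ ‖w‖ ^ 2 ≤ 1}]
  congr 1
  ext w
  have hcoord : |b.repr w 0| ≤ τ ↔ |⟪a, w⟫| ≤ τ * ‖a‖ := by
    rw [b.repr_apply_apply, hb, real_inner_smul_left, abs_mul, abs_inv, RCLike.ofReal_real_eq_id,
      id, abs_norm, inv_mul_le_iff₀ (norm_pos_iff.2 ha), mul_comm]
  change _ ↔ |b.repr w 0| ≤ τ ∧ 1 - δ ≤ ‖b.repr w‖ ^ 2 ∧ ‖b.repr w‖ ^ 2 ≤ 1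
  rw [hcoord, b.repr.norm_map]
  rfl

end PlaneVolume

section Square

theorem volume_square {ℓ : ℝ} (hℓ : 0 ≤ ℓ) : volume (square ℓ) = ENNReal.ofReal (ℓ ^ 2) := by
  refine (volume_plane_box measurableSet_Icc measurableSet_Icc).trans ?_
  rw [Real.volume_Icc, sub_zero, ← ENNReal.ofReal_mul hℓ, sq]

theorem isClosed_square (ℓ : ℝ) : IsClosed (square ℓ) :=
  (isClosed_Icc.preimage (by fun_prop : Continuous fun p : Plane => p 0)).inter
    (isClosed_Icc.preimage (by fun_prop : Continuous fun p : Plane => p 1))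

theorem isProbabilityMeasure_unifSq {ℓ : ℝ} (hℓ : 0 < ℓ) : IsProbabilityMeasure (unifSq ℓ) := by
  refine ProbabilityTheory.cond_isProbabilityMeasure_of_finite ?_ ?_
  · rw [volume_square hℓ.le]
    exact (ENNReal.ofReal_pos.2 (by positivity)).ne'
  · rw [volume_square hℓ.le]
    exact ENNReal.ofReal_ne_top

theorem unifSq_real_apply {ℓ : ℝ} (hℓ : 0 ≤ ℓ) (A : Set Plane) :
    (unifSq ℓ).real A = volume.real (A ∩ square ℓ) / ℓ ^ 2 := by
  have h : unifSq ℓ A = (volume (square ℓ))⁻¹ * volume (square ℓ ∩ A) :=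
    ProbabilityTheory.cond_apply (isClosed_square ℓ).measurableSet volume A
  rw [measureReal_def, h, volume_square hℓ, inter_comm, ENNReal.toReal_mul, ENNReal.toReal_inv,
    ENNReal.toReal_ofReal (by positivity), inv_mul_eq_div, measureReal_def]

theorem unifSq_real_le {ℓ c : ℝ} (hℓ : 0 ≤ ℓ) (hc : 0 ≤ c) {A : Set Plane}
    (hA : volume A ≤ ENNReal.ofReal c) : (unifSq ℓ).real A ≤ c / ℓ ^ 2 := by
  rw [unifSq_real_apply hℓ]
  gcongr
  exact ENNReal.toReal_le_of_le_ofReal hc ((measure_mono inter_subset_left).trans hA)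

theorem le_unifSq_real {ℓ c : ℝ} (hℓ : 0 ≤ ℓ) {A : Set Plane}
    (hA : ENNReal.ofReal c ≤ volume (A ∩ square ℓ)) : c / ℓ ^ 2 ≤ (unifSq ℓ).real A := by
  rw [unifSq_real_apply hℓ]
  gcongr
  have hfinite : volume (A ∩ square ℓ) ≠ ∞ := ne_top_of_le_ne_top
    (volume_square hℓ ▸ ENNReal.ofReal_ne_top) (measure_mono inter_subset_right)
  exact (ENNReal.ofReal_le_iff_le_toReal hfinite).1 hA

end Square

section OppositePairs

open scoped RealInnerProductSpace

-- `⟪a, w⟫` and `⟪b, w⟫` are both bounded above; as `b` is almost a negative multiple of `a`, the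
-- second bound is a lower bound for `⟪a, w⟫`.
theorem norm_sq_and_inner_bounds_of_one_lt_norm_sub {E : Type*} [NormedAddCommGroup E]
    [InnerProductSpace ℝ E] {a b w : E} {c ε K : ℝ} (hc : 1 / 2 ≤ c) (hab : ‖c • a + b‖ ≤ ε)
    (ha : ‖a‖ ^ 2 ≤ K) (hb : ‖b‖ ^ 2 + 2 * ε ≤ K) (hw : ‖w‖ ≤ 1)
    (haw : 1 < ‖a - w‖) (hbw : 1 < ‖b - w‖) :
    1 - K ≤ ‖w‖ ^ 2 ∧ |⟪a, w⟫| ≤ K := by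
  have hinner : -ε ≤ c * ⟪a, w⟫ + ⟪b, w⟫ := by
    rw [← real_inner_smul_left, ← inner_add_left]
    refine neg_le_of_abs_le ((abs_real_inner_le_norm _ _).trans ?_)
    exact (mul_le_of_le_one_right (norm_nonneg _) hw).trans hab
  have hw2 : ‖w‖ ^ 2 ≤ 1 := pow_le_one₀ (norm_nonneg w) hw
  have ha' : 2 * ⟪a, w⟫ < K - (1 - ‖w‖ ^ 2) := by
    linarith [norm_sub_sq_real a w, one_lt_pow₀ haw two_ne_zero]
  have hb' : 2 * (c * -⟪a, w⟫) < K - (1 - ‖w‖ ^ 2) := by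
    linarith [norm_sub_sq_real b w, one_lt_pow₀ hbw two_ne_zero]
  have hK : 0 < K - (1 - ‖w‖ ^ 2) := by nlinarith
  exact ⟨by linarith, abs_le.2 ⟨by nlinarith, by linarith⟩⟩

/-- The vectors `a` and `b` have length of order `s` and almost opposite directions: `a` points
right, `b` points left, and the segment joining them passes within `O(s²)` of the origin. -/
def IsOpposite (s : ℝ) (a b : Plane) : Prop :=
  (a 0 ∈ Icc (s / 2) s ∧ a 1 ∈ Icc (-(s / 2)) (s / 2)) ∧
    b 0 ∈ Icc (-s) (-(s / 2)) ∧ |a 0 * b 1 - a 1 * b 0| ≤ s ^ 3 / 8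

/-- The pairs of points in almost opposite positions at distance of order `s` from `v`. -/
def oppositePairs (v : Plane) (s : ℝ) : Set (Plane × Plane) :=
  {z | IsOpposite s (z.1 - v) (z.2 - v)}

/-- The triples `((x, y), w)` in which the point `w` of the unit disk centered at `v` lies in
neither of the unit disks centered at `x` and `y`. -/
def uncoveredTriples (v : Plane) : Set ((Plane × Plane) × Plane) :=
  {z | dist v z.2 ≤ 1 ∧ 1 < dist z.1.1 z.2 ∧ 1 < dist z.1.2 z.2}

theorem measurableSet_isOpposite (s : ℝ) :
    MeasurableSet {z : Plane × Plane | IsOpposite s z.1 z.2} := by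
  have hbox : MeasurableSet {z : Plane × Plane |
      z.1 0 ∈ Icc (s / 2) s ∧ z.1 1 ∈ Icc (-(s / 2)) (s / 2)} :=
    (measurableSet_Icc.preimage (by fun_prop)).inter (measurableSet_Icc.preimage (by fun_prop))
  exact hbox.inter ((measurableSet_Icc.preimage (by fun_prop)).inter (measurableSet_le
    (f := fun z : Plane × Plane => |z.1 0 * z.2 1 - z.1 1 * z.2 0|) (by fun_prop)
    measurable_const))

theorem measurableSet_oppositePairs (v : Plane) (s : ℝ) : MeasurableSet (oppositePairs v s) :=
  measurableSet_isOpposite s |>.preimage (f := fun z : Plane × Plane => (z.1 - v, z.2 - v))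
    (by fun_prop)

theorem measurableSet_uncoveredTriples (v : Plane) : MeasurableSet (uncoveredTriples v) := by
  unfold uncoveredTriples
  measurability

theorem volume_preimage_sub_right (v : Plane) (A : Set Plane) :
    volume ((· - v) ⁻¹' A) = volume A := by
  simp only [sub_eq_add_neg]
  exact measure_preimage_add_right volume (-v) A

section

variable {s : ℝ} {a b v : Plane} {z : Plane × Plane}

theorem norm_le_of_mem_Icc (ha₀ : a 0 ∈ Icc (s / 2) s) (ha₁ : a 1 ∈ Icc (-(s / 2)) (s / 2)) :
    ‖a‖ ≤ 2 * s := by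
  have hs : 0 ≤ s := by linarith [ha₀.1, ha₀.2]
  refine le_of_sq_le_sq ?_ (by positivity)
  rw [plane_norm_sq]
  nlinarith [ha₀.1, ha₀.2, ha₁.1, ha₁.2]

theorem IsOpposite.half_le_norm_fst (h : IsOpposite s a b) : s / 2 ≤ ‖a‖ :=
  h.1.1.1.trans ((le_abs_self _).trans (PiLp.norm_apply_le a 0))

theorem IsOpposite.norm_snd_sq_le (hs : 0 < s) (hs' : s ≤ 1 / 16) (h : IsOpposite s a b) :
    ‖b‖ ^ 2 ≤ 3 * s ^ 2 := by
  obtain ⟨⟨⟨ha₀, -⟩, ha₁⟩, ⟨hb₀, hb₀'⟩, hdet⟩ := h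
  have hb₁ : |b 1| ≤ 5 / 4 * s := by
    have hcross : |a 1 * b 0| ≤ s / 2 * s := by
      rw [abs_mul]
      exact mul_le_mul (abs_le.2 ha₁) (abs_le.2 ⟨hb₀, by linarith⟩) (abs_nonneg _) (by linarith)
    have hle : s / 2 * |b 1| ≤ s / 2 * (5 / 4 * s) :=
      calc s / 2 * |b 1| ≤ |a 0 * b 1| := by
            rw [abs_mul]
            gcongr
            exact ha₀.trans (le_abs_self _)
        _ ≤ s ^ 3 / 8 + s / 2 * s := by
            linarith [abs_sub_abs_le_abs_sub (a 0 * b 1) (a 1 * b 0)]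
        _ ≤ s / 2 * (5 / 4 * s) := by nlinarith [mul_pos hs hs]
    exact le_of_mul_le_mul_left hle (by linarith)
  rw [plane_norm_sq]
  nlinarith [abs_le.1 hb₁]

theorem IsOpposite.norm_snd_le (hs : 0 < s) (hs' : s ≤ 1 / 16) (h : IsOpposite s a b) :
    ‖b‖ ≤ 2 * s :=
  le_of_sq_le_sq (by nlinarith [h.norm_snd_sq_le hs hs']) (by linarith)

theorem IsOpposite.exists_norm_smul_add_le (hs : 0 < s) (h : IsOpposite s a b) :
    ∃ c : ℝ, 1 / 2 ≤ c ∧ ‖c • a + b‖ ≤ s ^ 2 / 4 := by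
  obtain ⟨⟨⟨ha₀, ha₀'⟩, -⟩, ⟨-, hb₀⟩, hdet⟩ := h
  have hpos : 0 < a 0 := by linarith
  refine ⟨-b 0 / a 0, by rw [le_div_iff₀ hpos]; linarith, ?_⟩
  have h₀ : (-b 0 / a 0) * a 0 + b 0 = 0 := by field_simp; ring
  have h₁ : (-b 0 / a 0) * a 1 + b 1 = (a 0 * b 1 - a 1 * b 0) / a 0 := by field_simp; ring
  refine le_of_sq_le_sq ?_ (by positivity)
  rw [plane_norm_sq]
  simp only [PiLp.add_apply, PiLp.smul_apply, smul_eq_mul, h₀, h₁]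
  rw [zero_pow two_ne_zero, zero_add, ← sq_abs, abs_div, abs_of_pos hpos]
  refine pow_le_pow_left₀ (by positivity) ?_ 2
  rw [div_le_iff₀ hpos]
  nlinarith [mul_pos hs hs]

theorem volume_uncoveredTriples_section_le (hs : 0 < s) (hs' : s ≤ 1 / 16)
    (hz : z ∈ oppositePairs v s) :
    volume (Prod.mk z ⁻¹' uncoveredTriples v) ≤ ENNReal.ofReal (256 * s ^ 3) := by
  have hz : IsOpposite s (z.1 - v) (z.2 - v) := hz
  set a := z.1 - v
  set b := z.2 - v
  obtain ⟨c, hc, hab⟩ := hz.exists_norm_smul_add_le hs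
  have ha : 0 < ‖a‖ := (half_pos hs).trans_le hz.half_le_norm_fst
  have hslab : Prod.mk z ⁻¹' uncoveredTriples v ⊆ (· - v) ⁻¹'
      {w | |⟪a, w⟫| ≤ 8 * s * ‖a‖ ∧ 1 - 4 * s ^ 2 ≤ ‖w‖ ^ 2 ∧ ‖w‖ ^ 2 ≤ 1} := by
    rintro w ⟨hvw, hxw, hyw⟩
    rw [dist_comm, dist_eq_norm] at hvw
    rw [dist_eq_norm, ← sub_sub_sub_cancel_right _ _ v] at hxw hyw
    have ha₂ : ‖a‖ ^ 2 ≤ 4 * s ^ 2 := by nlinarith [norm_le_of_mem_Icc hz.1.1 hz.1.2]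
    have hb₂ : ‖b‖ ^ 2 + 2 * (s ^ 2 / 4) ≤ 4 * s ^ 2 := by
      linarith [hz.norm_snd_sq_le hs hs', sq_nonneg s]
    obtain ⟨hw, hinner⟩ :=
      norm_sq_and_inner_bounds_of_one_lt_norm_sub hc hab ha₂ hb₂ hvw hxw hyw
    refine ⟨hinner.trans ?_, hw, pow_le_one₀ (norm_nonneg _) hvw⟩
    nlinarith [hz.half_le_norm_fst]
  calc volume (Prod.mk z ⁻¹' uncoveredTriples v)
      ≤ volume ((· - v) ⁻¹' _) := measure_mono hslab
    _ = volume _ := volume_preimage_sub_right v _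
    _ ≤ ENNReal.ofReal (8 * (8 * s) * (4 * s ^ 2)) :=
        volume_annulus_inter_slab_le (norm_pos_iff.1 ha) (by linarith) (by positivity)
    _ = ENNReal.ofReal (256 * s ^ 3) := by ring_nf

theorem volume_isOpposite_right (hs : 0 < s) (ha₀ : a 0 ∈ Icc (s / 2) s)
    (ha₁ : a 1 ∈ Icc (-(s / 2)) (s / 2)) :
    volume {b | IsOpposite s a b} = ENNReal.ofReal (s ^ 4 / (8 * a 0)) := by
  have hpos : 0 < a 0 := by linarith [ha₀.1]
  have hstrip : {b | IsOpposite s a b} =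
      {p | p 0 ∈ Icc (-s) (-(s / 2)) ∧ |a 0 * p 1 - a 1 * p 0| ≤ s ^ 3 / 8} := by
    ext b
    exact and_iff_right ⟨ha₀, ha₁⟩
  rw [hstrip, volume_strip measurableSet_Icc hpos.ne', Real.volume_Icc,
    ← ENNReal.ofReal_mul (by positivity), abs_of_pos hpos]
  congr 1
  field_simp
  ring

theorem volume_isOpposite_right_le (hs : 0 < s) (h : IsOpposite s a b) :
    volume {b | IsOpposite s a b} ≤ ENNReal.ofReal (s ^ 3 / 4) := by
  rw [volume_isOpposite_right hs h.1.1 h.1.2]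
  refine ENNReal.ofReal_le_ofReal ?_
  rw [div_le_iff₀ (by linarith [h.1.1.1])]
  nlinarith [h.1.1.1, pow_pos hs 3]

theorem le_volume_isOpposite_right (hs : 0 < s) (ha₀ : a 0 ∈ Icc (s / 2) s)
    (ha₁ : a 1 ∈ Icc (-(s / 2)) (s / 2)) :
    ENNReal.ofReal (s ^ 3 / 8) ≤ volume {b | IsOpposite s a b} := by
  rw [volume_isOpposite_right hs ha₀ ha₁]
  refine ENNReal.ofReal_le_ofReal ?_
  rw [le_div_iff₀ (by linarith [ha₀.1])]
  nlinarith [ha₀.2, pow_pos hs 3]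

theorem volume_isOpposite_left_le (hs : 0 < s) (h : IsOpposite s a b) :
    volume {a | IsOpposite s a b} ≤ ENNReal.ofReal (s ^ 3 / 4) := by
  obtain ⟨-, ⟨-, hb₀⟩, -⟩ := h
  have hneg : b 0 < 0 := by linarith
  have hstrip : {a | IsOpposite s a b} ⊆
      {p | p 0 ∈ Icc (s / 2) s ∧ |b 0 * p 1 - b 1 * p 0| ≤ s ^ 3 / 8} := by
    rintro a ⟨⟨ha₀, -⟩, -, hdet⟩
    refine ⟨ha₀, ?_⟩
    rwa [abs_sub_comm, mul_comm (b 1), mul_comm (b 0)]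
  refine (measure_mono hstrip).trans ?_
  rw [volume_strip measurableSet_Icc hneg.ne, Real.volume_Icc,
    ← ENNReal.ofReal_mul (by positivity), abs_of_neg hneg]
  refine ENNReal.ofReal_le_ofReal ?_
  rw [← mul_div_assoc, div_mul_eq_mul_div, div_le_iff₀ (neg_pos.2 hneg)]
  nlinarith [pow_pos hs 3]

end

variable {s ℓ : ℝ} {v : Plane}

theorem unifSq_oppositePairs_right_le (hs : 0 < s) (hℓ : 0 ≤ ℓ) {z : Plane × Plane}
    (hz : z ∈ oppositePairs v s) :
    (unifSq ℓ).real {y | (z.1, y) ∈ oppositePairs v s} ≤ s ^ 3 / 4 / ℓ ^ 2 := by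
  refine unifSq_real_le hℓ (by positivity) ?_
  exact (volume_preimage_sub_right v _).trans_le (volume_isOpposite_right_le hs hz)

theorem unifSq_oppositePairs_left_le (hs : 0 < s) (hℓ : 0 ≤ ℓ) {z : Plane × Plane}
    (hz : z ∈ oppositePairs v s) :
    (unifSq ℓ).real {x | (x, z.2) ∈ oppositePairs v s} ≤ s ^ 3 / 4 / ℓ ^ 2 := by
  refine unifSq_real_le hℓ (by positivity) ?_
  exact (volume_preimage_sub_right v _).trans_le (volume_isOpposite_left_le hs hz)

theorem unifSq_uncoveredTriples_section_le (hs : 0 < s) (hs' : s ≤ 1 / 16) (hℓ : 0 ≤ ℓ)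
    {z : Plane × Plane} (hz : z ∈ oppositePairs v s) :
    (unifSq ℓ).real (Prod.mk z ⁻¹' uncoveredTriples v) ≤ 256 * s ^ 3 / ℓ ^ 2 :=
  unifSq_real_le hℓ (by positivity) (volume_uncoveredTriples_section_le hs hs' hz)

theorem le_unifSq_prod_oppositePairs (hs : 0 < s) (hs' : s ≤ 1 / 16) (hℓ : 0 < ℓ)
    (hv : Metric.closedBall v (2 * s) ⊆ square ℓ) :
    s ^ 5 / (16 * ℓ ^ 4) ≤ ((unifSq ℓ).prod (unifSq ℓ)).real (oppositePairs v s) := by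
  have := isProbabilityMeasure_unifSq hℓ
  set box : Set Plane := {a | a 0 ∈ Icc (s / 2) s ∧ a 1 ∈ Icc (-(s / 2)) (s / 2)}
  have hboxVolume : volume box = ENNReal.ofReal (s ^ 2 / 2) := by
    rw [volume_plane_box measurableSet_Icc measurableSet_Icc, Real.volume_Icc, Real.volume_Icc,
      ← ENNReal.ofReal_mul (by linarith)]
    ring_nf
  have hbox : s ^ 2 / 2 / ℓ ^ 2 ≤ (unifSq ℓ).real ((· - v) ⁻¹' box) := by
    refine le_unifSq_real hℓ.le ?_
    have hsub : (· - v) ⁻¹' box ⊆ square ℓ := fun x hx =>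
      hv (by rw [mem_closedBall_iff_norm]; exact norm_le_of_mem_Icc hx.1 hx.2)
    rw [inter_eq_left.2 hsub, volume_preimage_sub_right, hboxVolume]
  have hsection : ∀ x ∈ (· - v) ⁻¹' box,
      s ^ 3 / 8 / ℓ ^ 2 ≤ (unifSq ℓ).real (Prod.mk x ⁻¹' oppositePairs v s) := by
    intro x hx
    refine le_unifSq_real hℓ.le ?_
    have hsub : Prod.mk x ⁻¹' oppositePairs v s ⊆ square ℓ := fun y hy =>
      hv (by rw [mem_closedBall_iff_norm]; exact IsOpposite.norm_snd_le hs hs' hy)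
    rw [inter_eq_left.2 hsub]
    exact (le_volume_isOpposite_right hs hx.1 hx.2).trans_eq
      (volume_preimage_sub_right v _).symm
  calc s ^ 5 / (16 * ℓ ^ 4) = s ^ 3 / 8 / ℓ ^ 2 * (s ^ 2 / 2 / ℓ ^ 2) := by ring
    _ ≤ s ^ 3 / 8 / ℓ ^ 2 * (unifSq ℓ).real ((· - v) ⁻¹' box) := by gcongr
    _ ≤ _ := mul_le_prod_real_of_le_fiber (measurableSet_oppositePairs v s) (by positivity)
        hsection

end OppositePairs

section Pruning

variable {n : ℕ} {ω : Fin n → Plane} {i j k : Fin n}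

theorem pruned_of_nbhd_subset (hj : i < j) (hk : i < k) (hjk : j ≠ k) (hij : dist (ω i) (ω j) ≤ 1)
    (hik : dist (ω i) (ω k) ≤ 1) (hd : dist (ω j) (ω k) ≤ 1)
    (hsub : nbhd ω i ⊆ nbhd ω j ∪ nbhd ω k) : Pruned ω i := by
  rcases hjk.lt_or_gt with hlt | hlt
  · exact ⟨k, j, hj, hlt, Or.inr ⟨hk.ne', hik⟩, Or.inr ⟨hj.ne', hij⟩, by rwa [dist_comm],
      hsub.trans_eq (union_comm _ _)⟩
  · exact ⟨j, k, hk, hlt, Or.inr ⟨hj.ne', hij⟩, Or.inr ⟨hk.ne', hik⟩, hd, hsub⟩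

theorem exists_uncovered_of_not_pruned (hj : i < j) (hk : i < k) (hjk : j ≠ k)
    (hij : dist (ω i) (ω j) ≤ 1) (hik : dist (ω i) (ω k) ≤ 1) (hd : dist (ω j) (ω k) ≤ 1)
    (h : ¬ Pruned ω i) :
    ∃ l, l ≠ i ∧ l ≠ j ∧ l ≠ k ∧ dist (ω i) (ω l) ≤ 1 ∧ 1 < dist (ω j) (ω l) ∧
      1 < dist (ω k) (ω l) := by
  obtain ⟨l, hl, hlu⟩ := not_subset.1 (mt (pruned_of_nbhd_subset hj hk hjk hij hik hd) h)
  simp only [nbhd, mem_union, mem_ofPred_eq, not_or, not_and, not_le] at hl hlu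
  obtain ⟨⟨hlj, hdj⟩, hlk, hdk⟩ := hlu
  have hli : l ≠ i := by
    rintro rfl
    exact absurd (hdj hlj) (not_lt.2 (by rwa [dist_comm]))
  exact ⟨l, hli, hlj, hlk, (hl.resolve_left hli).2, hdj hlj, hdk hlk⟩

theorem exists_disjoint_subsets_card {ι : Type*} {H : Finset ι} {m : ℕ} (hm : 2 * m ≤ H.card) :
    ∃ G₁ ⊆ H, ∃ G₂ ⊆ H, Disjoint G₁ G₂ ∧ G₁.card = m ∧ G₂.card = m := by
  classical
  obtain ⟨G₁, h₁, hc₁⟩ := Finset.exists_subset_card_eq (s := H) (n := m) (by omega)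
  obtain ⟨G₂, h₂, hc₂⟩ := Finset.exists_subset_card_eq (s := H \ G₁) (n := m)
    (by rw [Finset.card_sdiff_of_subset h₁]; omega)
  exact ⟨G₁, h₁, G₂, h₂.trans Finset.sdiff_subset, Finset.disjoint_sdiff.mono_right h₂, hc₁, hc₂⟩

variable {s : ℝ} {v : Plane}

theorem mem_blockedEvent_of_not_pruned_update (hs : 0 < s) (hs' : s ≤ 1 / 16)
    (hj : i < j) (hk : i < k) (hjk : j ≠ k) (h : ¬ Pruned (Function.update ω i v) i)
    (hω : ω ∈ pairEvent (oppositePairs v s) (j, k)) :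
    ω ∈ blockedEvent (oppositePairs v s) (uncoveredTriples v) (j, k) := by
  have hopp : IsOpposite s (ω j - v) (ω k - v) := hω
  have hdj : dist v (ω j) ≤ 2 * s := by
    rw [dist_comm, dist_eq_norm]
    exact norm_le_of_mem_Icc hopp.1.1 hopp.1.2
  have hdk : dist v (ω k) ≤ 2 * s := by
    rw [dist_comm, dist_eq_norm]
    exact hopp.norm_snd_le hs hs'
  have hdjk : dist (ω j) (ω k) ≤ 1 := by linarith [dist_triangle_left (ω j) (ω k) v]
  obtain ⟨l, hli, hlj, hlk, huncovered⟩ := exists_uncovered_of_not_pruned hj hk hjk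
    (by simpa [hj.ne'] using hdj.trans (by linarith))
    (by simpa [hk.ne'] using hdk.trans (by linarith))
    (by simpa [hj.ne', hk.ne'] using hdjk) h
  simp only [Function.update_self, Function.update_of_ne hj.ne', Function.update_of_ne hk.ne',
    Function.update_of_ne hli] at huncovered
  exact ⟨hω, l, hlj, hlk, huncovered⟩

theorem gMeasure_real_not_pruned_update_le {ℓ : ℝ} (hs : 0 < s) (hs' : s ≤ 1 / 16) (hℓ : 0 < ℓ)
    (hv : Metric.closedBall v (2 * s) ⊆ square ℓ) {m : ℕ} (hm : 0 < m)
    (hmi : 2 * m ≤ (Finset.Ioi i).card) :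
    (gMeasure n ℓ).real {ω | ¬ Pruned (Function.update ω i v) i} ≤
      64 * ℓ ^ 4 / (m ^ 2 * s ^ 5) + 32 * ℓ ^ 2 / (m * s ^ 2) + 512 * n * s ^ 3 / ℓ ^ 2 := by
  have := isProbabilityMeasure_unifSq hℓ
  have : IsProbabilityMeasure (gMeasure n ℓ) := Measure.pi.instIsProbabilityMeasure _
  set p := ((unifSq ℓ).prod (unifSq ℓ)).real (oppositePairs v s)
  have hp : s ^ 5 / (16 * ℓ ^ 4) ≤ p := le_unifSq_prod_oppositePairs hs hs' hℓ hv
  have hp₀ : 0 < p := lt_of_lt_of_le (by positivity) hp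
  obtain ⟨G₁, hG₁, G₂, hG₂, hG, hc₁, hc₂⟩ := exists_disjoint_subsets_card hmi
  have hblocked := pi_real_forall_pair_blocked_le (unifSq ℓ) (measurableSet_oppositePairs v s)
    (measurableSet_uncoveredTriples v) (by positivity)
    (fun z hz => unifSq_oppositePairs_right_le hs hℓ.le hz)
    (fun z hz => unifSq_oppositePairs_left_le hs hℓ.le hz) (by positivity)
    (fun z hz => unifSq_uncoveredTriples_section_le hs hs' hℓ.le hz) hG
    (Finset.card_pos.1 (hc₁ ▸ hm)) (Finset.card_pos.1 (hc₂ ▸ hm)) hp₀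
  rw [hc₁, hc₂, Fintype.card_fin] at hblocked
  have hsub : {ω | ¬ Pruned (Function.update ω i v) i} ⊆ {ω | ∀ a ∈ G₁ ×ˢ G₂,
      ω ∈ pairEvent (oppositePairs v s) a →
        ω ∈ blockedEvent (oppositePairs v s) (uncoveredTriples v) a} := by
    intro ω hω a ha
    obtain ⟨ha₁, ha₂⟩ := Finset.mem_product.1 ha
    exact mem_blockedEvent_of_not_pruned_update hs hs' (Finset.mem_Ioi.1 (hG₁ ha₁))
      (Finset.mem_Ioi.1 (hG₂ ha₂)) (ne_of_mem_product hG ha) hω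
  calc (gMeasure n ℓ).real {ω | ¬ Pruned (Function.update ω i v) i}
      ≤ _ := measureReal_mono hsub (measure_ne_top _ _)
    _ ≤ _ := hblocked
    _ ≤ 4 * (1 + (m + m) * (s ^ 3 / 4 / ℓ ^ 2)) / (m * m * (s ^ 5 / (16 * ℓ ^ 4))) +
          2 * (n * (256 * s ^ 3 / ℓ ^ 2)) := by gcongr
    _ = _ := by field_simp; ring

end Pruning

section DegreeDeviation

variable {ι E : Type*} [PseudoMetricSpace E] [MeasurableSpace E]

/-- The event that the number of points with index in `G` within distance `1` of the `i`-th point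
differs from its conditional mean, given the `i`-th point, by at least half of this mean; here
`P` is the common law of the points. -/
def degreeDeviation (P : Measure E) (i : ι) (G : Finset ι) : Set (ι → E) :=
  {ω | G.card * P.real (Metric.closedBall (ω i) 1) / 2 ≤
    |eventCount G (fun j => {ω | dist (ω j) (ω i) ≤ 1}) ω -
      G.card * P.real (Metric.closedBall (ω i) 1)|}

theorem update_mem_degreeDeviation_iff [DecidableEq ι] {P : Measure E} {i : ι} {G : Finset ι}
    (hi : i ∉ G) (v : E) (ω : ι → E) :
    Function.update ω i v ∈ degreeDeviation P i G ↔
      G.card * P.real (Metric.closedBall v 1) / 2 ≤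
        |eventCount G (fun j => {ω | ω j ∈ Metric.closedBall v 1}) ω -
          G.card * P.real (Metric.closedBall v 1)| := by
  have hcount : eventCount G (fun j => {ω | dist (ω j) (ω i) ≤ 1}) (Function.update ω i v) =
      eventCount G (fun j => {ω | ω j ∈ Metric.closedBall v 1}) ω := by
    refine Finset.sum_congr rfl fun j hj => ?_
    simp only [indicator, mem_ofPred_eq, Function.update_self, Pi.one_apply,
      Function.update_of_ne (ne_of_mem_of_not_mem hj hi), Metric.mem_closedBall]
  simp only [degreeDeviation, mem_ofPred_eq, hcount, Function.update_self]

variable [OpensMeasurableSpace E]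

theorem pi_real_update_mem_degreeDeviation_le [Fintype ι] [DecidableEq ι] (P : Measure E)
    [IsProbabilityMeasure P] {i : ι} {G : Finset ι} (hi : i ∉ G) (hG : G.Nonempty) {v : E}
    (hv : 0 < P.real (Metric.closedBall v 1)) :
    (Measure.pi fun _ => P).real {ω | Function.update ω i v ∈ degreeDeviation P i G} ≤
      4 / (G.card * P.real (Metric.closedBall v 1)) := by
  have hball : MeasurableSet (Metric.closedBall v 1) := measurableSet_closedBall
  have hmem (j : ι) : (Measure.pi fun _ => P).real {ω | ω j ∈ Metric.closedBall v 1} =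
      P.real (Metric.closedBall v 1) :=
    measureReal_preimage_of_measurePreserving (measurePreserving_eval (fun _ => P) j) hball
  have hmean : ∑ j ∈ G, (Measure.pi fun _ => P).real {ω | ω j ∈ Metric.closedBall v 1} =
      G.card * P.real (Metric.closedBall v 1) := by
    simp only [hmem, Finset.sum_const, nsmul_eq_mul]
  have hindep (j k : ι) (hjk : j ≠ k) :
      ProbabilityTheory.IndepSet {ω : ι → E | ω j ∈ Metric.closedBall v 1}
        {ω | ω k ∈ Metric.closedBall v 1} (Measure.pi fun _ => P) :=
    (ProbabilityTheory.indepFun_iff_indepSet_preimage (measurable_pi_apply j)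
      (measurable_pi_apply k)).1 ((iIndepFun_eval P).indepFun hjk) _ _ hball hball
  simp only [update_mem_degreeDeviation_iff hi, ← hmean]
  exact measureReal_half_mean_le_abs_eventCount_sub_le
    (fun j _ => measurable_pi_apply j hball) (fun j _ k _ => hindep j k) (hmean ▸ by positivity)

variable [SecondCountableTopology E]

theorem measurable_measureReal_closedBall (P : Measure E) [SFinite P] (r : ℝ) :
    Measurable fun v => P.real (Metric.closedBall v r) := by
  have hdist : MeasurableSet {z : E × E | dist z.2 z.1 ≤ r} := measurableSet_le
    (f := fun z : E × E => dist z.2 z.1) (by fun_prop) measurable_const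
  exact (measurable_measure_prodMk_left hdist).ennreal_toReal

theorem measurableSet_degreeDeviation (P : Measure E) [SFinite P] (i : ι) (G : Finset ι) :
    MeasurableSet (degreeDeviation P i G) := by
  have hcount : Measurable (eventCount G fun j => {ω : ι → E | dist (ω j) (ω i) ≤ 1}) :=
    Finset.measurable_sum G fun j _ => measurable_one.indicator (measurableSet_le
      (f := fun ω : ι → E => dist (ω j) (ω i)) (by fun_prop) measurable_const)
  have hmean : Measurable fun ω : ι → E => G.card * P.real (Metric.closedBall (ω i) 1) :=
    ((measurable_measureReal_closedBall P 1).comp (measurable_pi_apply i)).const_mul _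
  exact measurableSet_le (hmean.div_const 2) (hcount.sub hmean).abs

end DegreeDeviation

section EventD

variable {n : ℕ} {ℓ : ℝ} {i : Fin n}

theorem exists_half_interval_subset {t : ℝ} (hℓ : 1 / 2 ≤ ℓ) (ht : t ∈ Icc 0 ℓ) :
    ∃ c, t ∈ Icc c (c + 1 / 2) ∧ Icc c (c + 1 / 2) ⊆ Icc 0 ℓ := by
  refine ⟨min t (ℓ - 1 / 2), ⟨min_le_left _ _, ?_⟩, Icc_subset_Icc ?_ ?_⟩
  · rw [← sub_le_iff_le_add]
    exact le_min (by linarith) (by linarith [ht.2])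
  · exact le_min ht.1 (by linarith)
  · linarith [min_le_right t (ℓ - 1 / 2)]

theorem le_unifSq_closedBall (hℓ : 1 / 2 ≤ ℓ) {v : Plane} (hv : v ∈ square ℓ) :
    1 / 4 / ℓ ^ 2 ≤ (unifSq ℓ).real (Metric.closedBall v 1) := by
  obtain ⟨a, ha, haℓ⟩ := exists_half_interval_subset hℓ hv.1
  obtain ⟨b, hb, hbℓ⟩ := exists_half_interval_subset hℓ hv.2
  refine le_unifSq_real (by linarith) ?_
  have hbox : {p : Plane | p 0 ∈ Icc a (a + 1 / 2) ∧ p 1 ∈ Icc b (b + 1 / 2)} ⊆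
      Metric.closedBall v 1 ∩ square ℓ := by
    rintro p ⟨hp₀, hp₁⟩
    refine ⟨?_, haℓ hp₀, hbℓ hp₁⟩
    have h₀ := Real.dist_le_of_mem_Icc hp₀ ha
    have h₁ := Real.dist_le_of_mem_Icc hp₁ hb
    rw [add_sub_cancel_left] at h₀ h₁
    rw [Metric.mem_closedBall, EuclideanSpace.dist_eq, Fin.sum_univ_two]
    refine Real.sqrt_le_one.2 ?_
    nlinarith [dist_nonneg (x := p 0) (y := v 0), dist_nonneg (x := p 1) (y := v 1)]
  refine le_trans ?_ (measure_mono hbox)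
  rw [volume_plane_box measurableSet_Icc measurableSet_Icc, Real.volume_Icc, Real.volume_Icc,
    ← ENNReal.ofReal_mul (by linarith)]
  ring_nf
  exact le_rfl

theorem cast_card_Ioi (i : Fin n) : ((Finset.Ioi i).card : ℝ) = n - ((i : ℕ) + 1) := by
  rw [Fin.card_Ioi, Nat.sub_sub, Nat.cast_sub (by omega)]
  push_cast
  ring

theorem compl_eventD (hℓ : 0 ≤ ℓ) (i : Fin n) :
    (eventD n ℓ i)ᶜ = degreeDeviation (unifSq ℓ) i (Finset.Ioi i) ∪
      degreeDeviation (unifSq ℓ) i (Finset.Iio i) := by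
  have hIio : ((Finset.Iio i).card : ℝ) = i := by rw [Fin.card_Iio]
  ext ω
  simp only [degreeDeviation, eventD, cast_card_Ioi, hIio, eventCount_eq_ncard,
    unifSq_real_apply hℓ, μb, μw, ρb, ρw, areaDhat, mem_compl_iff, mem_union, mem_ofPred_eq,
    Finset.mem_Ioi, Finset.mem_Iio, not_and_or, not_lt, mul_div_assoc, measureReal_def]

theorem measurableSet_eventD (hℓ : 0 < ℓ) (i : Fin n) : MeasurableSet (eventD n ℓ i) := by
  have := isProbabilityMeasure_unifSq hℓ
  rw [← compl_compl (eventD n ℓ i), compl_eventD hℓ.le]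
  exact ((measurableSet_degreeDeviation _ i _).union (measurableSet_degreeDeviation _ i _)).compl

theorem gMeasure_real_update_notMem_eventD_le (hℓ : 1 / 2 ≤ ℓ) (hi : 0 < (i : ℕ))
    (hin : (i : ℕ) + 1 < n) {v : Plane} (hv : v ∈ square ℓ) :
    (gMeasure n ℓ).real {ω | Function.update ω i v ∉ eventD n ℓ i} ≤
      16 * ℓ ^ 2 / (Finset.Ioi i).card + 16 * ℓ ^ 2 / (Finset.Iio i).card := by
  have hℓ₀ : 0 < ℓ := by linarith
  have := isProbabilityMeasure_unifSq hℓ₀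
  have hball := le_unifSq_closedBall hℓ hv
  have hball₀ : 0 < (unifSq ℓ).real (Metric.closedBall v 1) :=
    lt_of_lt_of_le (by positivity) hball
  have hdeviation (G : Finset (Fin n)) (hiG : i ∉ G) (hG : G.Nonempty) :
      (gMeasure n ℓ).real {ω | Function.update ω i v ∈ degreeDeviation (unifSq ℓ) i G} ≤
        16 * ℓ ^ 2 / G.card := by
    have : (0 : ℝ) < G.card := by exact_mod_cast hG.card_pos
    calc _ ≤ 4 / (G.card * (unifSq ℓ).real (Metric.closedBall v 1)) :=
          pi_real_update_mem_degreeDeviation_le (unifSq ℓ) hiG hG hball₀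
      _ ≤ 4 / (G.card * (1 / 4 / ℓ ^ 2)) := by gcongr
      _ = _ := by field_simp; norm_num
  have hunion : {ω | Function.update ω i v ∉ eventD n ℓ i} =
      {ω | Function.update ω i v ∈ degreeDeviation (unifSq ℓ) i (Finset.Ioi i)} ∪
        {ω | Function.update ω i v ∈ degreeDeviation (unifSq ℓ) i (Finset.Iio i)} := by
    ext ω
    exact Set.ext_iff.1 (compl_eventD hℓ₀.le i) (Function.update ω i v)
  rw [hunion]
  refine (measureReal_union_le _ _).trans (add_le_add
    (hdeviation _ (by simp) (Finset.card_pos.1 ?_)) (hdeviation _ (by simp) (Finset.card_pos.1 ?_)))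
  · rw [Fin.card_Ioi]; omega
  · rw [Fin.card_Iio]; omega

end EventD

section Conditioning

theorem one_sub_two_mul_le_cond_real {Ω : Type*} [MeasurableSpace Ω] {μ : Measure Ω}
    [IsProbabilityMeasure μ] {A D B : Set Ω} (hA : MeasurableSet A) (hD : MeasurableSet D)
    (hB : MeasurableSet B) (hA₀ : 0 < μ.real A) (hAD : μ.real (A ∩ Dᶜ) ≤ 1 / 2 * μ.real A)
    {ε : ℝ} (hAB : μ.real (A ∩ Bᶜ) ≤ ε * μ.real A) :
    1 - 2 * ε ≤ (ProbabilityTheory.cond μ (D ∩ A)).real B := by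
  have hsplitD : μ.real (D ∩ A) + μ.real (A ∩ Dᶜ) = μ.real A := by
    rw [inter_comm D]
    exact measureReal_inter_add_sdiff hD
  have hsplitB : μ.real (D ∩ A ∩ B) + μ.real (D ∩ A ∩ Bᶜ) = μ.real (D ∩ A) :=
    measureReal_inter_add_sdiff hB
  have hsub : μ.real (D ∩ A ∩ Bᶜ) ≤ μ.real (A ∩ Bᶜ) :=
    measureReal_mono (inter_subset_inter_left _ inter_subset_right)
  have hε : 0 ≤ ε := nonneg_of_mul_nonneg_left (measureReal_nonneg.trans hAB) hA₀
  rw [measureReal_def, ProbabilityTheory.cond_apply (hD.inter hA), ENNReal.toReal_mul,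
    ENNReal.toReal_inv, ← measureReal_def, ← measureReal_def, inv_mul_eq_div,
    le_div_iff₀ (by linarith)]
  nlinarith

variable {n : ℕ} {ℓ : ℝ} {i : Fin n}

theorem measurableSet_closedBall_subset {E : Type*} [NormedAddCommGroup E] [MeasurableSpace E]
    [BorelSpace E] {K : Set E} (hK : IsClosed K) (r : ℝ) :
    MeasurableSet {v : E | Metric.closedBall v r ⊆ K} := by
  have htranslates : {v : E | Metric.closedBall v r ⊆ K} =
      ⋂ w ∈ Metric.closedBall (0 : E) r, (· + w) ⁻¹' K := by
    ext v
    simp only [mem_ofPred_eq, mem_iInter, mem_preimage]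
    exact ⟨fun h w hw => h (by simpa using hw),
      fun h p hp => by simpa using h (p - v) (by simpa [dist_eq_norm] using hp)⟩
  rw [htranslates]
  exact (isClosed_biInter fun w _ => hK.preimage (by fun_prop)).measurableSet

theorem unifSq_closedBall_subset_square_pos {r : ℝ} (hℓ : 1 ≤ ℓ) (hr : r ≤ 1 / 4) :
    0 < (unifSq ℓ).real {v : Plane | Metric.closedBall v r ⊆ square ℓ} := by
  set I : Set ℝ := Icc (1 / 4) (3 / 4)
  have hbox : {p : Plane | p 0 ∈ I ∧ p 1 ∈ I} ⊆
      {v : Plane | Metric.closedBall v r ⊆ square ℓ} ∩ square ℓ := by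
    rintro p ⟨hp₀, hp₁⟩
    have hI : ∀ x ∈ I, ∀ y, |y - x| ≤ 1 / 4 → y ∈ Icc 0 ℓ := fun x hx y hxy => by
      rw [abs_le] at hxy
      exact ⟨by linarith [hx.1], by linarith [hx.2]⟩
    have hself : ∀ x : ℝ, |x - x| ≤ 1 / 4 := fun x => by norm_num
    refine ⟨fun q hq => ?_, hI _ hp₀ _ (hself _), hI _ hp₁ _ (hself _)⟩
    have hcoord (k : Fin 2) : |q k - p k| ≤ 1 / 4 :=
      (PiLp.norm_apply_le (q - p) k).trans <| (mem_closedBall_iff_norm.1 hq).trans hr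
    exact ⟨hI _ hp₀ _ (hcoord 0), hI _ hp₁ _ (hcoord 1)⟩
  refine lt_of_lt_of_le (b := 1 / 4 / ℓ ^ 2) (by positivity) (le_unifSq_real (by linarith) ?_)
  refine le_trans ?_ (measure_mono hbox)
  rw [volume_plane_box measurableSet_Icc measurableSet_Icc, Real.volume_Icc,
    ← ENNReal.ofReal_mul (by norm_num)]
  norm_num

theorem measurableSet_pruned (i : Fin n) : MeasurableSet {ω : Fin n → Plane | Pruned ω i} := by
  have hdist (j k : Fin n) : Measurable fun ω : Fin n → Plane => dist (ω j) (ω k) ≤ 1 :=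
    measurableSet_setOfPred.1 (measurableSet_le (by fun_prop) (by fun_prop))
  have hnbhd (j k : Fin n) : Measurable fun ω : Fin n → Plane => j ∈ nbhd ω k :=
    measurable_const.or (measurable_const.and (hdist k j))
  exact measurableSet_setOfPred.2 <| .exists fun j => .exists fun k =>
    measurable_const.and <| measurable_const.and <| (hnbhd j i).and <| (hnbhd k i).and <|
      (hdist j k).and <| .forall fun l => (hnbhd l i).imp ((hnbhd l j).or (hnbhd l k))

theorem gMeasure_real_eventA_inter_le {r c : ℝ} (hℓ : 0 < ℓ) {B : Set (Fin n → Plane)}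
    (hB : MeasurableSet B) (hc₀ : 0 ≤ c)
    (hc : ∀ v, Metric.closedBall v r ⊆ square ℓ →
      (gMeasure n ℓ).real {ω | Function.update ω i v ∈ B} ≤ c) :
    (gMeasure n ℓ).real (eventA n ℓ r i ∩ B) ≤ c * (gMeasure n ℓ).real (eventA n ℓ r i) := by
  have := isProbabilityMeasure_unifSq hℓ
  exact pi_real_eval_inter_le (fun _ : Fin n => unifSq ℓ)
    (measurableSet_closedBall_subset (isClosed_square ℓ) r) hB hc₀ hc

theorem gMeasure_real_eventA_pos {r : ℝ} (hℓ : 1 ≤ ℓ) (hr : r ≤ 1 / 4) (i : Fin n) :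
    0 < (gMeasure n ℓ).real (eventA n ℓ r i) := by
  have := isProbabilityMeasure_unifSq (zero_lt_one.trans_le hℓ)
  exact (unifSq_closedBall_subset_square_pos hℓ hr).trans_eq
    (measureReal_preimage_of_measurePreserving
      (measurePreserving_eval (fun _ : Fin n => unifSq ℓ) i)
      (measurableSet_closedBall_subset (isClosed_square ℓ) r)).symm

theorem one_sub_two_mul_le_cond_pruned {r ε : ℝ} (hℓ : 1 ≤ ℓ) (hr : r ≤ 1 / 4) (hε : 0 ≤ ε)
    (hD : ∀ v, Metric.closedBall v r ⊆ square ℓ →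
      (gMeasure n ℓ).real {ω | Function.update ω i v ∉ eventD n ℓ i} ≤ 1 / 2)
    (hpruned : ∀ v, Metric.closedBall v r ⊆ square ℓ →
      (gMeasure n ℓ).real {ω | ¬ Pruned (Function.update ω i v) i} ≤ ε) :
    1 - 2 * ε ≤ (ProbabilityTheory.cond (gMeasure n ℓ)
      (eventD n ℓ i ∩ eventA n ℓ r i)).real {ω | Pruned ω i} := by
  have hℓ₀ : 0 < ℓ := by linarith
  have := isProbabilityMeasure_unifSq hℓ₀
  have : IsProbabilityMeasure (gMeasure n ℓ) := Measure.pi.instIsProbabilityMeasure _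
  have hA : MeasurableSet (eventA n ℓ r i) :=
    (measurableSet_closedBall_subset (isClosed_square ℓ) r).preimage (measurable_pi_apply i)
  have hDmeas := measurableSet_eventD hℓ₀ i
  exact one_sub_two_mul_le_cond_real hA hDmeas (measurableSet_pruned i)
    (gMeasure_real_eventA_pos hℓ hr i)
    (gMeasure_real_eventA_inter_le hℓ₀ hDmeas.compl (by norm_num) hD)
    (gMeasure_real_eventA_inter_le hℓ₀ (measurableSet_pruned i).compl hε hpruned)

end Conditioning

section Asymptotics

variable {n : ℕ} {ℓ t y : ℝ} {i : Fin n}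

/- With `s = 1 / t ^ 3` and `α = t ^ 8 * ℓ ^ 2`, that is `t = ξ ^ (1 / 8)`, the three terms of
`gMeasure_real_not_pruned_update_le` are `O(1 / t)`, `O(1 / t ^ 2)` and `O(y / t)`. -/
theorem failure_bound_le (hℓ : 0 < ℓ) (hy : 1 ≤ y) (hyt : y ^ 2 ≤ t) {m : ℕ}
    (hm : t ^ 8 * ℓ ^ 2 / 4 ≤ m) (hn : 16 * n ≤ t ^ 8 * ℓ ^ 2 * y) :
    64 * ℓ ^ 4 / (m ^ 2 * (1 / t ^ 3) ^ 5) + 32 * ℓ ^ 2 / (m * (1 / t ^ 3) ^ 2) +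
      512 * n * (1 / t ^ 3) ^ 3 / ℓ ^ 2 ≤ 1184 / y := by
  have ht₁ : 1 ≤ t := by nlinarith
  have hquadratic : 64 * ℓ ^ 4 / (m ^ 2 * (1 / t ^ 3) ^ 5) ≤ 1024 / t := by
    calc _ ≤ 64 * ℓ ^ 4 / ((t ^ 8 * ℓ ^ 2 / 4) ^ 2 * (1 / t ^ 3) ^ 5) := by gcongr
      _ = 1024 / t := by field_simp; norm_num
  have hlinear : 32 * ℓ ^ 2 / (m * (1 / t ^ 3) ^ 2) ≤ 128 / t := by
    calc _ ≤ 32 * ℓ ^ 2 / (t ^ 8 * ℓ ^ 2 / 4 * (1 / t ^ 3) ^ 2) := by gcongr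
      _ = 128 / t ^ 2 := by field_simp; norm_num
      _ ≤ 128 / t := by gcongr; exact le_self_pow₀ ht₁ two_ne_zero
  have huncovered : 512 * n * (1 / t ^ 3) ^ 3 / ℓ ^ 2 ≤ 32 * y / t := by
    calc 512 * n * (1 / t ^ 3) ^ 3 / ℓ ^ 2 = 32 * (16 * n) * (1 / t ^ 3) ^ 3 / ℓ ^ 2 := by ring
      _ ≤ 32 * (t ^ 8 * ℓ ^ 2 * y) * (1 / t ^ 3) ^ 3 / ℓ ^ 2 := by gcongr
      _ = 32 * y / t := by field_simp
  calc _ ≤ 1024 / t + 128 / t + 32 * y / t := by gcongr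
    _ ≤ 1184 * y / t := by rw [← add_div, ← add_div]; gcongr; linarith
    _ ≤ 1184 * y / y ^ 2 := by gcongr
    _ = 1184 / y := by field_simp

theorem gMeasure_real_update_notMem_eventD_le_half {v : Plane} (hℓ : 1 ≤ ℓ)
    (hi : 64 * ℓ ^ 2 ≤ (i : ℕ)) (hin : 64 * ℓ ^ 2 ≤ n - (((i : ℕ) : ℝ) + 1))
    (hv : v ∈ square ℓ) :
    (gMeasure n ℓ).real {ω | Function.update ω i v ∉ eventD n ℓ i} ≤ 1 / 2 := by
  have hℓ₂ : 1 ≤ ℓ ^ 2 := one_le_pow₀ hℓ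
  have hquarter {k : ℝ} (hk : 64 * ℓ ^ 2 ≤ k) : 16 * ℓ ^ 2 / k ≤ 1 / 4 := by
    rw [div_le_div_iff₀ (by linarith) (by norm_num)]
    linarith
  calc _ ≤ 16 * ℓ ^ 2 / (Finset.Ioi i).card + 16 * ℓ ^ 2 / (Finset.Iio i).card :=
        gMeasure_real_update_notMem_eventD_le (by linarith)
          (by exact_mod_cast (by linarith : (0 : ℝ) < (i : ℕ)))
          (by exact_mod_cast (by linarith : ((i : ℕ) : ℝ) + 1 < n)) hv
    _ ≤ 1 / 4 + 1 / 4 :=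
        add_le_add (hquarter (by rwa [cast_card_Ioi])) (hquarter (by rwa [Fin.card_Iio]))
    _ = 1 / 2 := by norm_num

theorem gMeasure_real_not_pruned_update_le_div {v : Plane} (hℓ : 1 ≤ ℓ) (hy : 4 ≤ y)
    (hyt : y ^ 2 ≤ t) (hn : 16 * n ≤ t ^ 8 * ℓ ^ 2 * y)
    (hin : ((i : ℕ) : ℝ) + 1 < n - t ^ 8 * ℓ ^ 2)
    (hv : Metric.closedBall v (1 / y) ⊆ square ℓ) :
    (gMeasure n ℓ).real {ω | ¬ Pruned (Function.update ω i v) i} ≤ 1184 / y := by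
  have ht : 16 ≤ t := by nlinarith
  have ht₈ : 2 ≤ t ^ 8 * ℓ ^ 2 := by
    nlinarith [le_self_pow₀ (by linarith : 1 ≤ t) (by norm_num : 8 ≠ 0), one_le_pow₀ (n := 2) hℓ]
  have hscale : 2 * (1 / t ^ 3) ≤ 1 / y := by
    rw [mul_one_div, div_le_div_iff₀ (by positivity) (by linarith)]
    nlinarith [pow_pos (by linarith : 0 < t) 2]
  have hsmall : 1 / t ^ 3 ≤ 1 / 16 :=
    one_div_le_one_div_of_le (by norm_num) (ht.trans (le_self_pow₀ (by linarith) (by norm_num)))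
  obtain ⟨m, hm, hm'⟩ : ∃ m, 2 * m ≤ (Finset.Ioi i).card ∧ (Finset.Ioi i).card ≤ 2 * m + 1 :=
    ⟨(Finset.Ioi i).card / 2, by omega, by omega⟩
  have hcard : (n : ℝ) - ((i : ℕ) + 1) ≤ 2 * m + 1 := by
    rw [← cast_card_Ioi]
    exact_mod_cast hm'
  exact (gMeasure_real_not_pruned_update_le (by positivity) hsmall (by linarith)
    ((Metric.closedBall_subset_closedBall hscale).trans hv)
    (by exact_mod_cast (by linarith : (0 : ℝ) < m)) hm).trans
      (failure_bound_le (by linarith) (by linarith) hyt (by linarith) hn)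

theorem one_sub_div_le_cond_pruned (hℓ : 1 ≤ ℓ) (hy : 4 ≤ y) (hyt : y ^ 2 ≤ t)
    (hn : 16 * n ≤ t ^ 8 * ℓ ^ 2 * y) (hi : t ^ 8 * ℓ ^ 2 ≤ (i : ℕ) + 1)
    (hin : ((i : ℕ) : ℝ) + 1 < n - t ^ 8 * ℓ ^ 2) :
    1 - 2368 / y ≤ (ProbabilityTheory.cond (gMeasure n ℓ)
      (eventD n ℓ i ∩ eventA n ℓ (1 / y) i)).real {ω | Pruned ω i} := by
  have ht : 2 ≤ t := by nlinarith
  have hℓ₂ : 1 ≤ ℓ ^ 2 := one_le_pow₀ hℓ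
  have ht₈ : 2 ^ 8 * ℓ ^ 2 ≤ t ^ 8 * ℓ ^ 2 := by gcongr
  rw [show 2368 / y = 2 * (1184 / y) by ring]
  exact one_sub_two_mul_le_cond_pruned hℓ (one_div_le_one_div_of_le (by norm_num) hy)
    (by positivity)
    (fun v hv => gMeasure_real_update_notMem_eventD_le_half hℓ (by linarith) (by linarith)
      (hv (Metric.mem_closedBall_self (by positivity))))
    (fun v hv => gMeasure_real_not_pruned_update_le_div hℓ hy hyt hn hin hv)

theorem eventually_log_rpow_le_rpow (a : ℝ) {b : ℝ} (hb : 0 < b) :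
    ∀ᶠ x : ℝ in Filter.atTop, log x ^ a ≤ x ^ b := by
  filter_upwards [(isLittleO_log_rpow_rpow_atTop a hb).bound one_pos,
    Filter.eventually_ge_atTop 1] with x hx hx₁
  have := log_nonneg hx₁
  rwa [norm_of_nonneg (by positivity), norm_of_nonneg (by positivity), one_mul] at hx

end Asymptotics

theorem pruned_conditional_probability_general (ℓ α : ℕ → ℝ)
    (hℓ : ∀ᶠ n in Filter.atTop, 1 ≤ ℓ n)
    (hξ : Filter.Tendsto (fun n => α n / ℓ n ^ 2) Filter.atTop Filter.atTop)
    (h16 : ∀ᶠ n : ℕ in Filter.atTop,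
      16 * (n : ℝ) / (Real.log (α n / ℓ n ^ 2)) ^ (3 / 2 : ℝ) < α n) :
    ∀ᶠ n in Filter.atTop, ∀ i : Fin n,
      α n ≤ ((i : ℕ) : ℝ) + 1 → ((i : ℕ) : ℝ) + 1 < (n : ℝ) - α n →
      ENNReal.ofReal (1 - 2368 / (Real.log (α n / ℓ n ^ 2)) ^ (3 / 2 : ℝ)) ≤
        (ProbabilityTheory.cond (gMeasure n (ℓ n))
            (eventD n (ℓ n) i ∩
              eventA n (ℓ n) (1 / (Real.log (α n / ℓ n ^ 2)) ^ (3 / 2 : ℝ)) i))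
          {ω | Pruned ω i} := by
  have hloglog : Filter.Tendsto (fun x => log x ^ (3 / 2 : ℝ)) Filter.atTop Filter.atTop :=
    (tendsto_rpow_atTop (by norm_num)).comp tendsto_log_atTop
  filter_upwards [hℓ, h16, hξ.eventually_ge_atTop 1,
    hξ.eventually (hloglog.eventually_ge_atTop 4),
    hξ.eventually (eventually_log_rpow_le_rpow 3 (by norm_num : (0 : ℝ) < 1 / 8))]
    with n hℓ h16 hξ₁ hlog₄ hlog i hi hin
  set ξ := α n / ℓ n ^ 2
  have hα : α n = (ξ ^ (1 / 8 : ℝ)) ^ 8 * ℓ n ^ 2 := by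
    rw [← rpow_mul_natCast (by linarith), Nat.cast_ofNat, one_div_mul_cancel (by norm_num),
      rpow_one, div_mul_cancel₀ _ (by positivity)]
  have hlog_sq : (log ξ ^ (3 / 2 : ℝ)) ^ 2 ≤ ξ ^ (1 / 8 : ℝ) := by
    rw [← rpow_mul_natCast (log_nonneg hξ₁)]
    norm_num at hlog ⊢
    exact hlog
  have h16' := ((div_lt_iff₀ (by linarith)).1 h16).le
  rw [hα] at hi hin h16'
  exact ENNReal.ofReal_le_of_le_toReal (one_sub_div_le_cond_pruned hℓ hlog₄ hlog_sq h16' hi hin)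

/-- Under the stated conditions on `⟨ℓ_n⟩` and `⟨α_n⟩`, there are `c̃ > 0` and
`n₀` such that for all `n ≥ n₀` and all indices `i` with `α_n ≤ i < n − α_n` (1-based IDs), the
conditional probability that vertex `i` is pruned by Rule 2, given `D_i ∩ A_i`, is at least
`1 − c̃/(log ξ_n)^{3/2}`, where `ξ_n = α_n/ℓ_n²` and `r = 1/(log ξ_n)^{3/2}`. -/
theorem pruned_conditional_probability (cbar : ℝ) (hcbar : 0 < cbar) (ℓ : ℕ → ℝ)
    (hmono : Monotone ℓ)
    (hℓ : ∀ n : ℕ, 1 < n → Real.log n ≤ ℓ n ∧ ℓ n ≤ cbar * Real.sqrt (n / Real.log n))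
    (α : ℕ → ℝ) (hα : ∀ n, 0 < α n)
    (hlittleo : (fun n => α n) =o[Filter.atTop] fun n => (n : ℝ))
    (hξ : Filter.Tendsto (fun n => α n / ℓ n ^ 2) Filter.atTop Filter.atTop)
    (h16 : ∀ᶠ n : ℕ in Filter.atTop,
      16 * (n : ℝ) / (Real.log (α n / ℓ n ^ 2)) ^ (3/2 : ℝ) < α n) :
    ∃ ctil > (0 : ℝ), ∃ n₀ : ℕ, ∀ n : ℕ, n₀ ≤ n → ∀ i : Fin n,
      α n ≤ ((i : ℕ) : ℝ) + 1 → ((i : ℕ) : ℝ) + 1 < (n : ℝ) - α n →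
      ENNReal.ofReal (1 - ctil / (Real.log (α n / ℓ n ^ 2)) ^ (3/2 : ℝ)) ≤
        (ProbabilityTheory.cond (gMeasure n (ℓ n))
            (eventD n (ℓ n) i ∩
              eventA n (ℓ n) (1 / (Real.log (α n / ℓ n ^ 2)) ^ (3/2 : ℝ)) i))
          {ω | Pruned ω i} := by
  exact ⟨2368, by norm_num, Filter.eventually_atTop.1 <|
    pruned_conditional_probability_general ℓ α (by
      filter_upwards [(tendsto_log_atTop.comp tendsto_natCast_atTop_atTop).eventually_ge_atTop 1,
        Filter.eventually_gt_atTop 1] with n hlog hn using hlog.trans (hℓ n hn).1) hξ h16⟩
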